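/- arXiv:1804.08524 — 9 statements merged into one kernel-verified Lean document; each statement's English description precedes it below -/
import Mathlib

section
/- Let X be a bounded random vector in ℝⁿ and let Z be a standard Gaussian vector in ℝⁿ independent of X; set Y = X + Z and f_Y(y) = E[φ_n(y − X)]. Then the conditional expectation of X given the σ-algebra generated by Y satisfies, almost surely, E[X | Y] = Y + ∇f_Y(Y)/f_Y(Y), where ∇f_Y denotes the gradient of f_Y. -/
open MeasureTheory Real

/-- The standard Gaussian density `φ_n(y) = (2π)^{-n/2} exp(-‖y‖²/2)` on `ℝⁿ`. -/
noncomputable def gaussDensity (n : ℕ) (y : EuclideanSpace ℝ (Fin n)) : ℝ :=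
  (2 * Real.pi) ^ (-(n : ℝ) / 2) * Real.exp (-‖y‖ ^ 2 / 2)

/-- The standard Gaussian measure on `ℝⁿ`, given by density `φ_n` w.r.t. Lebesgue. -/
noncomputable def stdGaussian (n : ℕ) : Measure (EuclideanSpace ℝ (Fin n)) :=
  volume.withDensity (fun z => ENNReal.ofReal (gaussDensity n z))


lemma gaussDensity_pos (n : ℕ) (y : EuclideanSpace ℝ (Fin n)) : 0 < gaussDensity n y := by
  unfold gaussDensity; positivity

lemma gaussDensity_continuous (n : ℕ) : Continuous (gaussDensity n) := by
  unfold gaussDensity; fun_prop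

lemma gaussDensity_le (n : ℕ) (y : EuclideanSpace ℝ (Fin n)) :
    gaussDensity n y ≤ (2 * Real.pi) ^ (-(n : ℝ) / 2) := by
  unfold gaussDensity
  apply mul_le_of_le_one_right (by positivity)
  rw [Real.exp_le_one_iff]
  have := sq_nonneg ‖y‖
  linarith

lemma gaussDensity_mul_norm_le (n : ℕ) (y : EuclideanSpace ℝ (Fin n)) :
    gaussDensity n y * ‖y‖ ≤ (2 * Real.pi) ^ (-(n : ℝ) / 2) := by
  unfold gaussDensity
  rw [mul_assoc]
  apply mul_le_of_le_one_right (by positivity)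
  have h1 : ‖y‖ ≤ Real.exp (‖y‖ ^ 2 / 2) := by
    have := Real.add_one_le_exp (‖y‖ ^ 2 / 2)
    nlinarith [sq_nonneg (‖y‖ - 1)]
  calc Real.exp (-‖y‖ ^ 2 / 2) * ‖y‖ ≤ Real.exp (-‖y‖ ^ 2 / 2) * Real.exp (‖y‖ ^ 2 / 2) := by
        gcongr
    _ = 1 := by
        rw [← Real.exp_add]
        rw [show -‖y‖ ^ 2 / 2 + ‖y‖ ^ 2 / 2 = 0 by ring, Real.exp_zero]

lemma gaussDensity_hasFDerivAt (n : ℕ) (x y : EuclideanSpace ℝ (Fin n)) :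
    HasFDerivAt (fun y => gaussDensity n (y - x))
      (InnerProductSpace.toDual ℝ _ (gaussDensity n (y - x) • (x - y))) y := by
  have h1 : HasFDerivAt (fun y : EuclideanSpace ℝ (Fin n) => y - x)
      (ContinuousLinearMap.id ℝ _) y := (hasFDerivAt_id y).sub_const x
  have h2 := h1.norm_sq
  have h3 := ((h2.const_mul (-1 / 2 : ℝ)).exp).const_mul ((2 * Real.pi) ^ (-(n : ℝ) / 2))
  have e : (fun y => gaussDensity n (y - x)) = fun y => (2 * Real.pi) ^ (-(n : ℝ) / 2) *
      Real.exp (-1 / 2 * ‖y - x‖ ^ 2) := by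
    funext y; unfold gaussDensity; congr 2; ring
  rw [e]
  refine h3.congr_fderiv ?_
  ext v
  have e2 : gaussDensity n (y - x) = (2 * Real.pi) ^ (-(n : ℝ) / 2) *
      Real.exp (-1 / 2 * ‖y - x‖ ^ 2) := congrFun e y
  rw [InnerProductSpace.toDual_apply_apply, inner_smul_left, e2]
  rw [← neg_sub y x, inner_neg_left]
  simp [inner_sub_left]
  ring

section
variable {n : ℕ} {Ω : Type*} [mΩ : MeasurableSpace Ω] {ℙ : Measure Ω}
    [IsProbabilityMeasure ℙ] {X Z : Ω → EuclideanSpace ℝ (Fin n)}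

lemma integrable_gauss (hX : Measurable X) (y : EuclideanSpace ℝ (Fin n)) :
    Integrable (fun ω => gaussDensity n (y - X ω)) ℙ := by
  refine Integrable.of_bound (C := (2 * Real.pi) ^ (-(n : ℝ) / 2)) ?_ (ae_of_all _ fun ω => ?_)
  · exact ((gaussDensity_continuous n).measurable.comp
      (measurable_const.sub hX)).aestronglyMeasurable
  · rw [Real.norm_of_nonneg (gaussDensity_pos _ _).le]; exact gaussDensity_le _ _

lemma integrable_gauss_smul (hX : Measurable X) {C : ℝ} (hC : ∀ ω, ‖X ω‖ ≤ C)
    (y : EuclideanSpace ℝ (Fin n)) :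
    Integrable (fun ω => gaussDensity n (y - X ω) • X ω) ℙ :=
  (integrable_gauss hX y).smul_bdd C hX.aestronglyMeasurable (ae_of_all _ hC)

lemma gradient_mix (hX : Measurable X) {C : ℝ} (hC : ∀ ω, ‖X ω‖ ≤ C)
    (y : EuclideanSpace ℝ (Fin n)) :
    gradient (fun y => ∫ ω, gaussDensity n (y - X ω) ∂ℙ) y
      = (∫ ω, gaussDensity n (y - X ω) • X ω ∂ℙ) - (∫ ω, gaussDensity n (y - X ω) ∂ℙ) • y := by
  have hm : ∀ y, AEStronglyMeasurable (fun ω => gaussDensity n (y - X ω)) ℙ :=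
    fun y => (integrable_gauss hX y).1
  have key : HasFDerivAt (fun y => ∫ ω, gaussDensity n (y - X ω) ∂ℙ)
      (∫ ω, InnerProductSpace.toDual ℝ _ (gaussDensity n (y - X ω) • (X ω - y)) ∂ℙ) y := by
    refine hasFDerivAt_integral_of_dominated_of_fderiv_le
      (F := fun y ω => gaussDensity n (y - X ω))
      (F' := fun y ω => InnerProductSpace.toDual ℝ _ (gaussDensity n (y - X ω) • (X ω - y)))
      (bound := fun _ => (2 * Real.pi) ^ (-(n : ℝ) / 2)) Filter.univ_mem
      (Filter.Eventually.of_forall hm) (integrable_gauss hX y) ?_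
      (ae_of_all _ fun ω y _ => ?_) (integrable_const _)
      (ae_of_all _ fun ω y _ => gaussDensity_hasFDerivAt n (X ω) y)
    · refine (LinearIsometryEquiv.continuous _).comp_aestronglyMeasurable ?_
      exact (hm y).smul (hX.sub measurable_const).aestronglyMeasurable
    · rw [LinearIsometryEquiv.norm_map, norm_smul, Real.norm_of_nonneg (gaussDensity_pos _ _).le,
        norm_sub_rev]
      exact gaussDensity_mul_norm_le _ _
  have hint : (∫ ω, InnerProductSpace.toDual ℝ _ (gaussDensity n (y - X ω) • (X ω - y)) ∂ℙ)
      = InnerProductSpace.toDual ℝ _ (∫ ω, gaussDensity n (y - X ω) • (X ω - y) ∂ℙ) := by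
    exact ((InnerProductSpace.toDual ℝ (EuclideanSpace ℝ (Fin n))).toLinearIsometry).integral_comp_comm _
  rw [hint] at key
  have hg := (hasGradientAt_iff_hasFDerivAt.2 key).gradient
  rw [hg]
  simp_rw [smul_sub]
  rw [integral_sub (integrable_gauss_smul hX hC y) ((integrable_gauss hX y).smul_const y),
    integral_smul_const]

lemma law_pair (hX : Measurable X) (hZ : Measurable Z)
    (hZlaw : Measure.map Z ℙ = stdGaussian n)
    (hindep : ProbabilityTheory.IndepFun X Z ℙ) :
    Measure.map (fun ω => (X ω, X ω + Z ω)) ℙ =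
      ((Measure.map X ℙ).prod volume).withDensity
        (fun p => ENNReal.ofReal (gaussDensity n (p.2 - p.1))) := by
  have hg := gaussDensity_continuous n
  have := Measure.isProbabilityMeasure_map (μ := ℙ) hX.aemeasurable
  have hmg : Measurable (fun z => ENNReal.ofReal (gaussDensity n z)) :=
    hg.measurable.ennreal_ofReal
  have hsh : Measurable (fun p : EuclideanSpace ℝ (Fin n) × EuclideanSpace ℝ (Fin n) =>
      (p.1, p.1 + p.2)) := by fun_prop
  have h1 : Measure.map (fun ω => (X ω, X ω + Z ω)) ℙ =
      Measure.map (fun p : EuclideanSpace ℝ (Fin n) × EuclideanSpace ℝ (Fin n) =>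
      (p.1, p.1 + p.2)) (((Measure.map X ℙ).prod volume).withDensity
        (fun p => ENNReal.ofReal (gaussDensity n p.2))) := by
    rw [← prod_withDensity_right hmg]
    change _ = Measure.map _ ((Measure.map X ℙ).prod (stdGaussian n))
    rw [← hZlaw, ← (ProbabilityTheory.indepFun_iff_map_prod_eq_prod_map_map hX.aemeasurable
      hZ.aemeasurable).1 hindep, Measure.map_map hsh (hX.prodMk hZ)]
    rfl
  rw [h1]
  refine Measure.ext_of_lintegral _ fun ψ hψ => ?_
  have hm2 : Measurable (fun p : EuclideanSpace ℝ (Fin n) × EuclideanSpace ℝ (Fin n) =>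
      ENNReal.ofReal (gaussDensity n p.2)) := hmg.comp measurable_snd
  have hm3 : Measurable (fun p : EuclideanSpace ℝ (Fin n) × EuclideanSpace ℝ (Fin n) =>
      ENNReal.ofReal (gaussDensity n (p.2 - p.1))) :=
    hmg.comp (measurable_snd.sub measurable_fst)
  rw [lintegral_map hψ hsh, lintegral_withDensity_eq_lintegral_mul _ hm2
      (show Measurable (fun p : EuclideanSpace ℝ (Fin n) × EuclideanSpace ℝ (Fin n) =>
        ψ (p.1, p.1 + p.2)) from hψ.comp hsh),
    lintegral_withDensity_eq_lintegral_mul _ hm3 hψ,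
    ← (measurePreserving_prod_add (Measure.map X ℙ)
      (volume : Measure (EuclideanSpace ℝ (Fin n)))).lintegral_comp (hm3.mul hψ)]
  simp

lemma tweedie_integral_pair (hX : Measurable X) (hZ : Measurable Z)
    (hZlaw : Measure.map Z ℙ = stdGaussian n)
    (hindep : ProbabilityTheory.IndepFun X Z ℙ)
    (h : EuclideanSpace ℝ (Fin n) × EuclideanSpace ℝ (Fin n) → EuclideanSpace ℝ (Fin n))
    (hm : Measurable h) (hi : Integrable (fun ω => h (X ω, X ω + Z ω)) ℙ) :
    ∫ ω, h (X ω, X ω + Z ω) ∂ℙ =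
      ∫ y, ∫ ω, gaussDensity n (y - X ω) • h (X ω, y) ∂ℙ := by
  have := Measure.isProbabilityMeasure_map (μ := ℙ) hX.aemeasurable
  have hXY : Measurable (fun ω => (X ω, X ω + Z ω)) := hX.prodMk (hX.add hZ)
  have hmg : Measurable (gaussDensity n) := (gaussDensity_continuous n).measurable
  have hm3 : Measurable (fun p : EuclideanSpace ℝ (Fin n) × EuclideanSpace ℝ (Fin n) =>
      ENNReal.ofReal (gaussDensity n (p.2 - p.1))) :=
    (hmg.comp (measurable_snd.sub measurable_fst)).ennreal_ofReal
  have hi2 : Integrable h (Measure.map (fun ω => (X ω, X ω + Z ω)) ℙ) :=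
    (integrable_map_measure hm.aestronglyMeasurable hXY.aemeasurable).2 hi
  rw [← integral_map (f := h) hXY.aemeasurable hm.aestronglyMeasurable]
  rw [law_pair hX hZ hZlaw hindep] at hi2 ⊢
  rw [integrable_withDensity_iff_integrable_smul' hm3
    (ae_of_all _ fun _ => ENNReal.ofReal_lt_top)] at hi2
  rw [integral_withDensity_eq_integral_toReal_smul hm3
    (ae_of_all _ fun _ => ENNReal.ofReal_lt_top), integral_prod_symm _ hi2]
  congr 1
  funext y
  simp_rw [ENNReal.toReal_ofReal (gaussDensity_pos _ _).le]
  rw [integral_map (f := fun x => gaussDensity n (y - x) • h (x, y)) hX.aemeasurable]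
  exact ((hmg.comp (measurable_const.sub measurable_id)).smul
    (hm.comp (measurable_id.prodMk measurable_const))).aestronglyMeasurable

end

/-- Let `X` be a bounded random vector in `ℝⁿ`, `Z` an independent
standard Gaussian vector, `Y = X + Z`, and `f_Y(y) = E[φ_n(y - X)]`.  Then, almost
surely, `E[X | Y] = Y + ∇f_Y(Y)/f_Y(Y)`. -/
theorem stmt5 (n : ℕ) {Ω : Type*} [mΩ : MeasurableSpace Ω] (ℙ : Measure Ω)
    [IsProbabilityMeasure ℙ]
    (X Z : Ω → EuclideanSpace ℝ (Fin n)) (hX : Measurable X) (hZ : Measurable Z)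
    (hbdd : ∃ C : ℝ, ∀ ω, ‖X ω‖ ≤ C)
    (hZlaw : Measure.map Z ℙ = stdGaussian n)
    (hindep : ProbabilityTheory.IndepFun X Z ℙ)
    (Y : Ω → EuclideanSpace ℝ (Fin n)) (hY : ∀ ω, Y ω = X ω + Z ω)
    (fY : EuclideanSpace ℝ (Fin n) → ℝ)
    (hfY : ∀ y, fY y = ∫ ω, gaussDensity n (y - X ω) ∂ℙ) :
    ℙ[X | MeasurableSpace.comap Y (borel (EuclideanSpace ℝ (Fin n)))] =ᵐ[ℙ]
      fun ω => Y ω + (fY (Y ω))⁻¹ • gradient fY (Y ω) := by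
  obtain ⟨C, hC⟩ := hbdd
  obtain rfl : fY = fun y => ∫ ω, gaussDensity n (y - X ω) ∂ℙ := funext hfY
  obtain rfl : Y = fun ω => X ω + Z ω := funext hY
  set f : EuclideanSpace ℝ (Fin n) → ℝ := fun y => ∫ ω, gaussDensity n (y - X ω) ∂ℙ with hf
  set m : EuclideanSpace ℝ (Fin n) → EuclideanSpace ℝ (Fin n) :=
    fun y => ∫ ω, gaussDensity n (y - X ω) • X ω ∂ℙ with hmdef
  have hmg : Measurable (gaussDensity n) := (gaussDensity_continuous n).measurable
  have hfpos : ∀ y, 0 < f y := by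
    intro y
    refine (integral_pos_iff_support_of_nonneg (fun ω => (gaussDensity_pos _ _).le)
      (integrable_gauss hX y)).2 ?_
    have : Function.support (fun ω => gaussDensity n (y - X ω)) = Set.univ := by
      ext ω; simp [(gaussDensity_pos n (y - X ω)).ne']
    rw [this]; simp
  have hpm : Measurable (fun p : EuclideanSpace ℝ (Fin n) × Ω => gaussDensity n (p.1 - X p.2)) :=
    hmg.comp (measurable_fst.sub (hX.comp measurable_snd))
  have hfm : Measurable f :=
    (StronglyMeasurable.integral_prod_right' (ν := ℙ) hpm.stronglyMeasurable).measurable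
  have hmm : Measurable m :=
    (StronglyMeasurable.integral_prod_right' (ν := ℙ)
      (hpm.smul (hX.comp measurable_snd)).stronglyMeasurable).measurable
  have hgm : Measurable (fun y => (f y)⁻¹ • m y) := hfm.inv.smul hmm
  have hgrad : ∀ y, y + (f y)⁻¹ • gradient f y = (f y)⁻¹ • m y := by
    intro y
    have h1 : gradient f y = m y - f y • y := gradient_mix hX hC y
    rw [h1, smul_sub, smul_smul, inv_mul_cancel₀ (hfpos y).ne', one_smul]
    abel
  have hgb : ∀ y, ‖(f y)⁻¹ • m y‖ ≤ C := by
    intro y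
    have h1 : ‖m y‖ ≤ f y * C := by
      rw [hf]
      simp only
      rw [← integral_mul_const]
      refine norm_integral_le_of_norm_le ((integrable_gauss hX y).mul_const C)
        (ae_of_all _ fun ω => ?_)
      rw [norm_smul, Real.norm_of_nonneg (gaussDensity_pos _ _).le]
      exact mul_le_mul_of_nonneg_left (hC ω) (gaussDensity_pos _ _).le
    rw [norm_smul, norm_inv, Real.norm_of_nonneg (hfpos y).le, inv_mul_le_iff₀ (hfpos y)]
    exact h1
  simp_rw [hgrad]
  have hYm : Measurable (fun ω => X ω + Z ω) := hX.add hZ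
  rw [← BorelSpace.measurable_eq (α := EuclideanSpace ℝ (Fin n))]
  have hgi : Integrable (fun ω => (f (X ω + Z ω))⁻¹ • m (X ω + Z ω)) ℙ :=
    Integrable.of_bound (hgm.comp hYm).aestronglyMeasurable C (ae_of_all _ fun ω => hgb _)
  have hXi : Integrable X ℙ := Integrable.of_bound hX.aestronglyMeasurable C (ae_of_all _ hC)
  refine (ae_eq_condExp_of_forall_setIntegral_eq hYm.comap_le hXi
    (fun s _ _ => hgi.integrableOn) ?_ ?_).symm
  · rintro _ ⟨A, hA, rfl⟩ -
    have hS := hYm hA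
    rw [← integral_indicator hS, ← integral_indicator hS]
    have hgi' := hgi.indicator hS
    have hXi' := hXi.indicator hS
    have e1 := tweedie_integral_pair hX hZ hZlaw hindep
      (fun p => A.indicator (fun y => (f y)⁻¹ • m y) p.2)
      ((hgm.indicator hA).comp measurable_snd) hgi'
    have e2 := tweedie_integral_pair hX hZ hZlaw hindep
      ((Prod.snd ⁻¹' A).indicator Prod.fst)
      (measurable_fst.indicator (measurable_snd hA)) hXi'
    refine e1.trans (Eq.trans ?_ e2.symm)
    congr 1
    funext y
    by_cases hy : y ∈ A
    · simp only [Set.indicator, hy, Set.mem_preimage, if_true]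
      rw [integral_smul_const]
      exact smul_inv_smul₀ (hfpos y).ne' _
    · simp [Set.indicator, hy]
  · exact (hgm.comp (comap_measurable _)).stronglyMeasurable.aestronglyMeasurable
end

section
/- Let R > 0, let X be a real random variable uniform on the two-point set {−R, R} (each with probability 1/2), and let Z be a standard Gaussian real random variable independent of X. Then, almost surely, E[X | X + Z] = R · tanh(R (X + Z)). -/
open MeasureTheory Real

open ProbabilityTheory in
lemma pdf_tanh_aux (R y : ℝ) :
    gaussianPDFReal (-R) 1 y * (-R - R * Real.tanh (R * y)) =
      -(gaussianPDFReal R 1 y * (R - R * Real.tanh (R * y))) := by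
  have hc : Real.cosh (R * y) ≠ 0 := (Real.cosh_pos _).ne'
  have h1 : gaussianPDFReal (-R) 1 y * Real.exp (R * y) =
      gaussianPDFReal R 1 y * Real.exp (-(R * y)) := by
    simp only [gaussianPDFReal, mul_assoc, ← Real.exp_add]
    congr 2
    push_cast
    ring
  rw [Real.tanh_eq_sinh_div_cosh]
  field_simp
  have h2 : Real.cosh (R * y) + Real.sinh (R * y) = Real.exp (R * y) := Real.cosh_add_sinh _
  have h3 : Real.cosh (R * y) - Real.sinh (R * y) = Real.exp (-(R * y)) := Real.cosh_sub_sinh _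
  rw [← h2, ← h3] at h1
  linear_combination (-R) * h1

lemma abs_tanh_aux (x : ℝ) : |Real.tanh x| ≤ 1 := by
  exact (Real.abs_tanh_lt_one x).le

/-- Let `R > 0`, let `X` be uniform on `{-R, R}` and `Z ~ N(0,1)`
independent of `X`.  Then, almost surely, `E[X | X + Z] = R · tanh(R(X + Z))`. -/
theorem stmt6 (R : ℝ) (hR : 0 < R)
    {Ω : Type*} [mΩ : MeasurableSpace Ω] (P : Measure Ω) [IsProbabilityMeasure P]
    (X Z : Ω → ℝ) (hX : Measurable X) (hZ : Measurable Z)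
    (hXlaw : Measure.map X P =
      (1 / 2 : ENNReal) • Measure.dirac (-R) + (1 / 2 : ENNReal) • Measure.dirac R)
    (hZlaw : Measure.map Z P = ProbabilityTheory.gaussianReal 0 1)
    (hindep : ProbabilityTheory.IndepFun X Z P) :
    P[X | MeasurableSpace.comap (fun ω => X ω + Z ω) (borel ℝ)] =ᵐ[P]
      fun ω => R * Real.tanh (R * (X ω + Z ω)) := by
  have hb : borel ℝ = (inferInstance : MeasurableSpace ℝ) := (BorelSpace.measurable_eq).symm
  rw [hb]
  have hS : Measurable (fun ω => X ω + Z ω) := hX.add hZ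
  have hm := hS.comap_le
  have htm : Measurable (fun y : ℝ => R * Real.tanh (R * y)) := by
    have : Measurable Real.tanh := by
      have h : Real.tanh = fun x => Real.sinh x / Real.cosh x := by
        ext x; exact Real.tanh_eq_sinh_div_cosh x
      rw [h]; fun_prop
    fun_prop
  have hXi : Integrable X P := by
    have h : Integrable (fun x : ℝ => x) (Measure.map X P) := by
      rw [hXlaw]
      refine Integrable.add_measure ?_ ?_ <;>
      · refine Integrable.smul_measure ?_ (by simp)
        exact integrable_dirac (by simp)
    exact h.comp_measurable hX
  have hgi : Integrable (fun ω => R * Real.tanh (R * (X ω + Z ω))) P := by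
    refine Integrable.of_bound (C := R) (htm.comp hS).aestronglyMeasurable (.of_forall fun ω => ?_)
    rw [Real.norm_eq_abs, abs_mul, abs_of_pos hR]
    have := abs_tanh_aux (R * (X ω + Z ω))
    nlinarith
  refine (ae_eq_condExp_of_forall_setIntegral_eq hm hXi (fun s _ _ => hgi.integrableOn) ?_ ?_).symm
  · rintro s ⟨A, hA, rfl⟩ -
    have hAS := hS hA
    symm
    rw [← sub_eq_zero, ← integral_sub hXi.integrableOn hgi.integrableOn, ← integral_indicator hAS]
    let H : ℝ → ℝ → ℝ := fun x y => A.indicator (fun y => x - R * Real.tanh (R * y)) y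
    let G : ℝ × ℝ → ℝ := fun p => H p.1 (p.1 + p.2)
    have hG : Measurable G := by
      have : G = ((fun p : ℝ × ℝ => p.1 + p.2) ⁻¹' A).indicator
          (fun p => p.1 - R * Real.tanh (R * (p.1 + p.2))) := by
        ext p; rfl
      rw [this]
      exact (measurable_fst.sub (htm.comp (measurable_fst.add measurable_snd))).indicator
        ((measurable_fst.add measurable_snd) hA)
    have e1 : ((fun ω => X ω + Z ω) ⁻¹' A).indicator
        (fun ω => X ω - R * Real.tanh (R * (X ω + Z ω))) = fun ω => G (X ω, Z ω) := by
      ext ω; rfl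
    have hXZ : Measurable (fun ω => (X ω, Z ω)) := hX.prodMk hZ
    have hlaw := (ProbabilityTheory.indepFun_iff_map_prod_eq_prod_map_map
      hX.aemeasurable hZ.aemeasurable).1 hindep
    have hGi : Integrable G ((P.map X).prod (P.map Z)) := by
      rw [← hlaw, integrable_map_measure hG.aestronglyMeasurable hXZ.aemeasurable]
      have := (hXi.sub hgi).indicator hAS
      exact this.congr (.of_forall fun ω => congrFun e1 ω)
    rw [e1, ← integral_map (φ := fun ω => (X ω, Z ω)) hXZ.aemeasurable hG.aestronglyMeasurable,
      hlaw]
    have : IsProbabilityMeasure (P.map Z) := Measure.isProbabilityMeasure_map hZ.aemeasurable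
    have : IsProbabilityMeasure (P.map X) := Measure.isProbabilityMeasure_map hX.aemeasurable
    rw [integral_prod _ hGi]
    have hI := hGi.integral_prod_left
    rw [hXlaw] at hI ⊢
    rw [integral_add_measure (hI.mono_measure (Measure.le_add_right le_rfl))
      (hI.mono_measure (Measure.le_add_left le_rfl)), integral_smul_measure,
      integral_smul_measure, integral_dirac, integral_dirac, hZlaw]
    have key : ∀ x : ℝ, ∫ z, G (x, z) ∂(ProbabilityTheory.gaussianReal 0 1) =
        ∫ y, ProbabilityTheory.gaussianPDFReal x 1 y * H x y := by
      intro x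
      have hH : Measurable (H x) := (measurable_const.sub htm).indicator hA
      have := ProbabilityTheory.gaussianReal_map_const_add (μ := 0) (v := 1) x
      rw [zero_add] at this
      have h2 := ProbabilityTheory.integral_gaussianReal_eq_integral_smul (μ := x) (v := 1)
        (f := H x) one_ne_zero
      simp only [smul_eq_mul] at h2
      rw [← h2, ← this, integral_map (by fun_prop) hH.aestronglyMeasurable]
    rw [key, key, ← smul_add]
    have : ∀ y, ProbabilityTheory.gaussianPDFReal (-R) 1 y * H (-R) y =
        -(ProbabilityTheory.gaussianPDFReal R 1 y * H R y) := by
      intro y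
      by_cases hy : y ∈ A
      · simp only [H, Set.indicator_of_mem hy]; exact pdf_tanh_aux R y
      · simp [H, hy]
    simp only [this, integral_neg, neg_add_cancel, smul_zero]
  · exact (htm.comp (comap_measurable (fun ω => X ω + Z ω))).stronglyMeasurable.aestronglyMeasurable
end

section
/- Let n = 3 and R > 0. For every y ∈ ℝ³ with y ≠ 0, the posterior mean of the uniform distribution on the sphere of radius R under Gaussian observation satisfies ( ∫_{S²} (Rθ) φ_3(y − Rθ) dσ̄_2(θ) ) / ( ∫_{S²} φ_3(y − Rθ) dσ̄_2(θ) ) = R · (y/‖y‖) · ( coth(R‖y‖) − 1/(R‖y‖) ). -/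
open MeasureTheory Real

/-- The uniform probability measure `σ̄₂` on the unit sphere `S²` of `ℝ³`:
the surface measure `volume.toSphere` normalized to total mass `1`. -/
noncomputable def unifSphere2 : Measure (Metric.sphere (0 : EuclideanSpace ℝ (Fin 3)) 1) :=
  ((volume : Measure (EuclideanSpace ℝ (Fin 3))).toSphere Set.univ)⁻¹ •
    (volume : Measure (EuclideanSpace ℝ (Fin 3))).toSphere

/-- The standard Gaussian density `φ₃(y) = (2π)^{-3/2} exp(-‖y‖²/2)` on `ℝ³`. -/
noncomputable def gaussDensity3 (y : EuclideanSpace ℝ (Fin 3)) : ℝ :=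
  (2 * Real.pi) ^ (-(3 : ℝ) / 2) * Real.exp (-‖y‖ ^ 2 / 2)

abbrev E3 := EuclideanSpace ℝ (Fin 3)
noncomputable abbrev sig : Measure (Metric.sphere (0 : E3) 1) := (volume : Measure E3).toSphere

lemma polar (h : E3 → ℝ) (g : ℝ → ℝ) :
    ∫ x : E3, h (‖x‖⁻¹ • x) * g ‖x‖ = (∫ θ, h (θ : E3) ∂sig) * ∫ r in Set.Ioi (0:ℝ), r ^ 2 * g r := by
  have hd : Module.finrank ℝ E3 - 1 = 2 := by simp
  calc
    _ = ∫ x : ({(0 : E3)}ᶜ : Set E3), h (‖x.1‖⁻¹ • x.1) * g ‖x.1‖ ∂((volume : Measure E3).comap (↑)) := by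
      rw [integral_subtype_comap (measurableSet_singleton _).compl
        (fun x : E3 ↦ h (‖x‖⁻¹ • x) * g ‖x‖), restrict_compl_singleton]
    _ = ∫ x, h (x.1 : E3) * g x.2 ∂sig.prod (.volumeIoiPow (Module.finrank ℝ E3 - 1)) := by
      simpa using (volume : Measure E3).measurePreserving_homeomorphUnitSphereProd.integral_comp
        (Homeomorph.measurableEmbedding _)
        (fun p : Metric.sphere (0 : E3) 1 × Set.Ioi (0:ℝ) => h (p.1 : E3) * g p.2)
    _ = (∫ θ, h (θ : E3) ∂sig) * ∫ x : Set.Ioi (0 : ℝ), g x ∂.volumeIoiPow (Module.finrank ℝ E3 - 1) :=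
      integral_prod_mul (fun θ : Metric.sphere (0 : E3) 1 => h (θ : E3)) (fun x : Set.Ioi (0:ℝ) => g x)
    _ = _ := by
      rw [hd]
      simp only [Measure.volumeIoiPow, ENNReal.ofReal]
      rw [integral_withDensity_eq_integral_smul,
        integral_subtype_comap measurableSet_Ioi fun a ↦ Real.toNNReal (a ^ 2) • g a,
        setIntegral_congr_fun measurableSet_Ioi fun x hx ↦ ?_]
      · rw [NNReal.smul_def, Real.coe_toNNReal _ (pow_nonneg (le_of_lt hx) _)]; rfl
      · exact (measurable_subtype_coe.pow_const _).real_toNNReal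

noncomputable def G (k : ℕ) : ℝ := ∫ r in Set.Ioi (0:ℝ), r ^ k * exp (-r ^ 2)

lemma G_eq (k : ℕ) : G k = 1 / 2 * Gamma (((k:ℝ) + 1) / 2) := by
  have := integral_rpow_mul_exp_neg_rpow (p := 2) (q := k) (by norm_num)
    (by have : (0:ℝ) ≤ k := k.cast_nonneg
        linarith)
  rw [← this, G]
  norm_cast

lemma G_pos (k : ℕ) : 0 < G k := by
  rw [G_eq]
  have := Gamma_pos_of_pos (s := ((k:ℝ) + 1) / 2) (by positivity)
  positivity

lemma G_rec (k : ℕ) : G (k + 2) = (k + 1) / 2 * G k := by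
  rw [G_eq, G_eq]
  have := Gamma_add_one (s := ((k:ℝ) + 1) / 2) (by positivity)
  have h2 : (((k + 2 : ℕ) : ℝ) + 1) / 2 = ((k:ℝ) + 1) / 2 + 1 := by push_cast; ring
  rw [h2, this]; ring

lemma full (k : ℕ) : ∫ x : ℝ, x ^ k * exp (-x ^ 2) = (1 + (-1) ^ k) * G k := by
  rcases Nat.even_or_odd k with hk | hk
  · have := integral_comp_abs (f := fun x => x ^ k * exp (-x ^ 2))
    simp only [hk.pow_abs, sq_abs] at this
    rw [this, hk.neg_one_pow, G]; ring
  · have := integral_neg_eq_self (fun x : ℝ => x ^ k * exp (-x ^ 2)) volume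
    simp only [hk.neg_pow, neg_sq, even_two.neg_pow, neg_mul, integral_neg] at this
    rw [hk.neg_one_pow]; linarith

noncomputable def cA : ℝ := 2 * (∫ x : ℝ, exp (-x ^ 2)) ^ 2

lemma cA_pos : 0 < cA := by
  have := full 0
  simp at this
  have h := G_pos 0
  rw [cA, this]; positivity

lemma gaussMoment (u : E3) (hu : ‖u‖ = 1) (k : ℕ) :
    ∫ x : E3, (inner ℝ u x) ^ k * exp (-‖x‖ ^ 2)
      = (∫ x : ℝ, x ^ k * exp (-x ^ 2)) * (∫ x : ℝ, exp (-x ^ 2)) ^ 2 := by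
  obtain ⟨b, hb⟩ := Orthonormal.exists_orthonormalBasis_extension_of_card_eq (𝕜 := ℝ) (E := E3)
    (ι := Fin 3) (by simp) (v := fun _ => u) (s := {0}) (by
      constructor
      · intro i; simpa using hu
      · intro i j hij; exact absurd (Subsingleton.elim i j) hij)
  have hb0 : b 0 = u := hb 0 rfl
  have e1 : ∀ x : E3, inner ℝ u x = (b.repr x) 0 := by
    intro x; rw [b.repr_apply_apply, hb0]
  have e2 : ∀ x : E3, ‖x‖ = ‖b.repr x‖ := by intro x; simp
  have h1 := b.measurePreserving_repr.integral_comp b.repr.toHomeomorph.measurableEmbedding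
    (fun z : E3 => (z 0) ^ k * exp (-‖z‖ ^ 2))
  have h2 := (PiLp.volume_preserving_toLp (Fin 3)).integral_comp
    (MeasurableEquiv.toLp 2 (Fin 3 → ℝ)).measurableEmbedding
    (fun z : E3 => (z 0) ^ k * exp (-‖z‖ ^ 2))
  calc _ = ∫ x : E3, ((b.repr x) 0) ^ k * exp (-‖b.repr x‖ ^ 2) := by
        simp_rw [e1, ← e2]
    _ = _ := h1
    _ = _ := h2.symm
    _ = ∫ x : Fin 3 → ℝ, ∏ i, (![fun x : ℝ => x ^ k * exp (-x ^ 2), fun x => exp (-x ^ 2),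
          fun x => exp (-x ^ 2)] i) (x i) := by
        congr 1; ext x
        simp only [EuclideanSpace.norm_sq_eq, Fin.sum_univ_three, Fin.prod_univ_three]
        simp [neg_add, exp_add, mul_assoc]
        ring_nf
        try simp
    _ = _ := by
        rw [integral_fintype_prod_volume_eq_prod]
        simp [Fin.prod_univ_three]; ring

lemma moment (u : E3) (hu : ‖u‖ = 1) (k : ℕ) :
    ∫ θ, (inner ℝ u (θ : E3)) ^ k ∂sig = cA * ∫ s in Set.Ioc (-1:ℝ) 1, s ^ k := by
  have hp := polar (fun x => (inner ℝ u x) ^ k) (fun r => r ^ k * exp (-r ^ 2))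
  have e : ∀ x : E3, (inner ℝ u (‖x‖⁻¹ • x)) ^ k * (‖x‖ ^ k * exp (-‖x‖ ^ 2))
      = (inner ℝ u x) ^ k * exp (-‖x‖ ^ 2) := by
    intro x
    rw [← mul_assoc, ← mul_pow, inner_smul_right]
    rcases eq_or_ne x 0 with rfl | hx
    · simp
    · have : ‖x‖ ≠ 0 := norm_ne_zero_iff.2 hx
      congr 2; field_simp
  simp only [e] at hp
  rw [gaussMoment u hu, full] at hp
  have hG : ∫ r in Set.Ioi (0:ℝ), r ^ 2 * (r ^ k * exp (-r ^ 2)) = G (k + 2) := by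
    rw [G]; congr 1; ext r; ring
  rw [hG, G_rec] at hp
  rw [← intervalIntegral.integral_of_le (by norm_num), integral_pow, cA]
  have := G_pos k
  have hk : (0:ℝ) < k + 1 := by positivity
  field_simp at hp ⊢
  have hn : (-1 : ℝ) ^ (k + 1) = -(-1) ^ k := by rw [pow_succ]; ring
  rw [hn, ← hp, one_pow]; ring

lemma series {X : Type*} [MeasurableSpace X] (μ : Measure X) [IsFiniteMeasure μ] (s : X → ℝ)
    (hs : Measurable s) (hb : ∀ᵐ x ∂μ, |s x| ≤ 1) (t : ℝ) (j : ℕ) :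
    HasSum (fun k : ℕ => t ^ k / (k.factorial : ℝ) * ∫ x, s x ^ (k + j) ∂μ)
      (∫ x, s x ^ j * exp (t * s x) ∂μ) := by
  have hbd : ∀ m : ℕ, ∀ᵐ x ∂μ, ‖s x ^ m‖ ≤ 1 := by
    intro m
    filter_upwards [hb] with x hx
    rw [norm_pow]; exact pow_le_one₀ (norm_nonneg _) hx
  have hi : ∀ m : ℕ, Integrable (fun x => s x ^ m) μ := fun m =>
    Integrable.of_bound (hs.pow_const m).aestronglyMeasurable 1 (hbd m)
  have key := hasSum_integral_of_summable_integral_norm (μ := μ)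
    (F := fun (k : ℕ) x => t ^ k / (k.factorial : ℝ) * s x ^ (k + j))
    (fun k => (hi _).const_mul _) (by
      refine Summable.of_nonneg_of_le (fun k => integral_nonneg fun x => norm_nonneg _) (fun k => ?_)
        ((Real.summable_pow_div_factorial |t|).mul_right (μ.real Set.univ))
      calc _ ≤ ∫ x, |t| ^ k / (k.factorial : ℝ) ∂μ := by
            refine integral_mono_ae ((hi _).const_mul _).norm (integrable_const _) ?_
            filter_upwards [hbd (k + j)] with x hx
            rw [norm_mul]
            calc _ ≤ ‖t ^ k / (k.factorial : ℝ)‖ * 1 := by gcongr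
              _ = _ := by simp
        _ = _ := by simp [mul_comm])
  simp only [integral_const_mul] at key
  suffices h : ∫ x, s x ^ j * exp (t * s x) ∂μ
      = ∫ x, ∑' k : ℕ, t ^ k / (k.factorial : ℝ) * s x ^ (k + j) ∂μ by rw [h]; exact key
  refine integral_congr_ae (Filter.Eventually.of_forall fun x => ?_)
  have := (NormedSpace.expSeries_div_hasSum_exp (𝔸 := ℝ) (t * s x)).mul_left (s x ^ j)
  rw [← Real.exp_eq_exp_ℝ] at this
  beta_reduce
  rw [← this.tsum_eq]
  congr 1; ext k
  rw [mul_pow, pow_add]; ring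

lemma arch (u : E3) (hu : ‖u‖ = 1) (t : ℝ) (j : ℕ) :
    ∫ θ, (inner ℝ u (θ : E3)) ^ j * exp (t * inner ℝ u (θ : E3)) ∂sig
      = cA * ∫ s in (-1:ℝ)..1, s ^ j * exp (t * s) := by
  have h1 := series sig (fun θ => inner ℝ u (θ : E3)) (by fun_prop)
    (Filter.Eventually.of_forall fun θ => by
      have := abs_real_inner_le_norm u (θ : E3)
      simpa [hu] using this) t j
  have h2 := (series (volume.restrict (Set.Ioc (-1:ℝ) 1)) (fun s => s) measurable_id (by
    filter_upwards [ae_restrict_mem measurableSet_Ioc] with x hx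
    exact abs_le.2 ⟨hx.1.le, hx.2⟩) t j).mul_left cA
  rw [intervalIntegral.integral_of_le (by norm_num)]
  refine h1.unique ?_
  have e : (fun k : ℕ => t ^ k / (k.factorial : ℝ) * ∫ θ, (inner ℝ u (θ : E3)) ^ (k + j) ∂sig)
      = fun k : ℕ => cA * (t ^ k / (k.factorial : ℝ) * ∫ s in Set.Ioc (-1:ℝ) 1, s ^ (k + j)) := by
    ext k
    rw [moment u hu]; ring
  rw [e]; exact h2

lemma int0 (t : ℝ) (ht : t ≠ 0) : ∫ s in (-1:ℝ)..1, s ^ 0 * exp (t * s) = 2 * sinh t / t := by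
  rw [intervalIntegral.integral_eq_sub_of_hasDerivAt (f := fun s => exp (t * s) / t)]
  · rw [sinh_eq]; simp; ring
  · intro x _
    have := (((hasDerivAt_id x).const_mul t).exp).div_const t
    refine this.congr_deriv ?_
    simp; field_simp
  · apply Continuous.intervalIntegrable; fun_prop

lemma int1 (t : ℝ) (ht : t ≠ 0) :
    ∫ s in (-1:ℝ)..1, s ^ 1 * exp (t * s) = 2 * (cosh t / t - sinh t / t ^ 2) := by
  rw [intervalIntegral.integral_eq_sub_of_hasDerivAt
    (f := fun s => (s / t - 1 / t ^ 2) * exp (t * s))]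
  · rw [sinh_eq, cosh_eq]; simp; field_simp; ring
  · intro x _
    have := (((hasDerivAt_id x).div_const t).sub_const (1 / t ^ 2)).mul
      (((hasDerivAt_id x).const_mul t).exp)
    refine this.congr_deriv ?_
    simp; field_simp; ring
  · apply Continuous.intervalIntegrable; fun_prop

lemma orth (u v : E3) (huv : inner ℝ u v = 0) (t : ℝ) :
    ∫ θ, inner ℝ v (θ : E3) * exp (t * inner ℝ u (θ : E3)) ∂sig = 0 := by
  have hp := polar (fun x => inner ℝ v x * exp (t * inner ℝ u x)) (fun r => exp (-r ^ 2))
  have hz : ∫ x : E3, (inner ℝ v (‖x‖⁻¹ • x) * exp (t * inner ℝ u (‖x‖⁻¹ • x))) * exp (-‖x‖ ^ 2)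
      = 0 := by
    set ρ := (Submodule.span ℝ {v})ᗮ.reflection
    have hv : ρ v = -v := Submodule.reflection_orthogonalComplement_singleton_eq_neg v
    have hu : ρ u = u := Submodule.reflection_mem_subspace_eq_self
      (Submodule.mem_orthogonal_singleton_iff_inner_left.2 huv)
    have iv : ∀ x, inner ℝ v (ρ x) = - inner ℝ v x := fun x => by
      rw [← inner_neg_left, ← hv, ← ρ.inner_map_map v (ρ x)]; simp [ρ]
    have iu : ∀ x, inner ℝ u (ρ x) = inner ℝ u x := fun x => by
      conv_lhs => rw [← hu]
      exact ρ.inner_map_map u x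
    have := ρ.measurePreserving.integral_comp ρ.toHomeomorph.measurableEmbedding
      (fun x : E3 => (inner ℝ v (‖x‖⁻¹ • x) * exp (t * inner ℝ u (‖x‖⁻¹ • x))) * exp (-‖x‖ ^ 2))
    simp only [ρ.norm_map, inner_smul_right, iv, iu, mul_neg, neg_mul, integral_neg] at this
    simp only [inner_smul_right]
    linarith
  rw [hz] at hp
  exact (mul_eq_zero.1 hp.symm).resolve_right (G_pos 2).ne'

lemma vecInt (u : E3) (hu : ‖u‖ = 1) (t : ℝ) :
    ∫ θ, exp (t * inner ℝ u (θ : E3)) • (θ : E3) ∂sig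
      = (cA * ∫ s in (-1:ℝ)..1, s ^ 1 * exp (t * s)) • u := by
  have hint : Integrable (fun θ : Metric.sphere (0 : E3) 1 =>
      exp (t * inner ℝ u (θ : E3)) • (θ : E3)) sig := by
    apply Continuous.integrable_of_hasCompactSupport
    · fun_prop
    · exact HasCompactSupport.of_compactSpace _
  refine ext_inner_left ℝ fun w => ?_
  rw [← integral_inner hint, inner_smul_right, ← arch u hu]
  have huu : inner ℝ u u = (1:ℝ) := by rw [real_inner_self_eq_norm_sq, hu]; norm_num
  set v := w - (inner ℝ w u : ℝ) • u with hv
  have hvo : inner ℝ u v = (0:ℝ) := by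
    rw [hv, inner_sub_right, inner_smul_right, huu, real_inner_comm]; ring
  have h0 := orth u v hvo t
  have e : ∀ θ : Metric.sphere (0 : E3) 1, inner ℝ w (exp (t * inner ℝ u (θ : E3)) • (θ : E3))
      = inner ℝ v (θ : E3) * exp (t * inner ℝ u (θ : E3))
        + inner ℝ w u * ((inner ℝ u (θ : E3)) ^ 1 * exp (t * inner ℝ u (θ : E3))) := by
    intro θ
    rw [hv, inner_sub_left, inner_smul_right, real_inner_smul_left]; ring
  simp_rw [e]
  rw [integral_add, h0, integral_const_mul, zero_add, mul_comm]
  · apply Continuous.integrable_of_hasCompactSupport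
    · fun_prop
    · exact HasCompactSupport.of_compactSpace _
  · apply Continuous.integrable_of_hasCompactSupport
    · fun_prop
    · exact HasCompactSupport.of_compactSpace _

/-- For `R > 0` and `0 ≠ y ∈ ℝ³`, the posterior mean of the uniform
distribution on the sphere of radius `R` under Gaussian observation satisfies
`(∫_{S²} (Rθ) φ₃(y-Rθ) dσ̄₂) / (∫_{S²} φ₃(y-Rθ) dσ̄₂)
  = R (y/‖y‖) (coth(R‖y‖) - 1/(R‖y‖))`, with `coth x = cosh x / sinh x`. -/
theorem stmt7 (R : ℝ) (hR : 0 < R) (y : EuclideanSpace ℝ (Fin 3)) (hy : y ≠ 0) :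
    (∫ θ : Metric.sphere (0 : EuclideanSpace ℝ (Fin 3)) 1,
          gaussDensity3 (y - R • (θ : EuclideanSpace ℝ (Fin 3))) ∂unifSphere2)⁻¹ •
        (∫ θ : Metric.sphere (0 : EuclideanSpace ℝ (Fin 3)) 1,
          gaussDensity3 (y - R • (θ : EuclideanSpace ℝ (Fin 3))) •
            (R • (θ : EuclideanSpace ℝ (Fin 3))) ∂unifSphere2) =
      (R * (Real.cosh (R * ‖y‖) / Real.sinh (R * ‖y‖) - 1 / (R * ‖y‖))) •
        (‖y‖⁻¹ • y) := by
  have hny : 0 < ‖y‖ := norm_pos_iff.2 hy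
  set t := R * ‖y‖ with ht
  have htp : 0 < t := by positivity
  set u : E3 := ‖y‖⁻¹ • y with hu_def
  have hu : ‖u‖ = 1 := by rw [hu_def, norm_smul, norm_inv, norm_norm]; field_simp
  have hyu : y = ‖y‖ • u := by rw [hu_def, smul_smul, mul_inv_cancel₀ hny.ne', one_smul]
  obtain ⟨K, hK, hKe⟩ : ∃ K : ℝ, 0 < K ∧ ∀ θ : Metric.sphere (0 : E3) 1,
      gaussDensity3 (y - R • (θ : E3)) = K * exp (t * inner ℝ u (θ : E3)) := by
    refine ⟨(2 * Real.pi) ^ (-(3 : ℝ) / 2) * exp (-(‖y‖ ^ 2 + R ^ 2) / 2), by positivity, ?_⟩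
    intro θ
    have hθ : ‖(θ : E3)‖ = 1 := by simp
    have hi : inner ℝ y (θ : E3) = ‖y‖ * inner ℝ u (θ : E3) := by
      conv_lhs => rw [hyu]
      rw [real_inner_smul_left]
    rw [gaussDensity3, mul_assoc, ← exp_add, norm_sub_sq_real, inner_smul_right, norm_smul, hθ, hi,
      norm_eq_abs, mul_one, sq_abs, ht]
    congr 2; ring
  have hc0 : sig Set.univ ≠ 0 := by
    rw [Ne, Measure.measure_univ_eq_zero]; exact Measure.toSphere_ne_zero _
  set c : ℝ := ((sig Set.univ)⁻¹).toReal with hc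
  have hcp : 0 < c := ENNReal.toReal_pos (ENNReal.inv_ne_zero.2 (measure_ne_top _ _))
    (ENNReal.inv_ne_top.2 hc0)
  have hsm : ∀ θ : Metric.sphere (0 : E3) 1, (K * exp (t * inner ℝ u (θ : E3))) • (R • (θ : E3))
      = (K * R) • (exp (t * inner ℝ u (θ : E3)) • (θ : E3)) := by
    intro θ; simp only [smul_smul]; congr 1; ring
  have h0 := arch u hu t 0
  rw [int0 t htp.ne'] at h0
  simp only [pow_zero, one_mul] at h0
  simp only [hKe, hsm, unifSphere2, integral_smul_measure, integral_const_mul, integral_smul]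
  rw [vecInt u hu, int1 t htp.ne', h0, ← hc]
  simp only [smul_smul, smul_eq_mul]
  congr 1
  have := cA_pos
  have hs : 0 < sinh t := sinh_pos_iff.2 htp
  field_simp
end

section
/- Let R > 0, let X be a real random variable uniform on {−R, R}, and let Z be a standard Gaussian real random variable independent of X; set Y = X + Z. Then the Kullback–Leibler divergence of the joint law of (X, Y) from the product of the marginal laws of X and Y (i.e., the mutual information I(X;Y) in nats) equals R² − ∫_ℝ log( cosh(R(R+z)) ) (2π)^{−1/2} e^{−z²/2} dz. -/
open MeasureTheory Real
open scoped Classical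

/-- The Kullback–Leibler divergence `KL(μ ‖ ν)` in nats, valued in `ℝ≥0∞`:
it equals `∫ log(dμ/dν) dμ` when `μ ≪ ν` and the log-likelihood ratio is
`μ`-integrable, and `∞` otherwise. -/
noncomputable def klDiv {α : Type*} [MeasurableSpace α] (μ ν : Measure α) : ENNReal :=
  if μ ≪ ν ∧ Integrable (llr μ ν) μ then ENNReal.ofReal (∫ x, llr μ ν x ∂μ) else ⊤

open MeasureTheory Real ProbabilityTheory in
lemma aux_dirac (a : ℝ) (L : Measure ℝ) [SFinite L] (f : ℝ × ℝ → ENNReal) (hf : Measurable f) :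
    ((Measure.dirac a).prod L).withDensity f =
      (Measure.dirac a).prod (L.withDensity (fun y => f (a, y))) := by
  have hm : Measurable (Prod.mk a : ℝ → ℝ × ℝ) := measurable_prodMk_left
  rw [Measure.dirac_prod, Measure.dirac_prod]
  ext s hs
  rw [withDensity_apply _ hs, Measure.map_apply hm hs, withDensity_apply _ (hm hs),
    Measure.restrict_map hm hs, lintegral_map hf hm]

open MeasureTheory Real ProbabilityTheory in
lemma aux_pdf (R a y : ℝ) (ha : a ^ 2 = R ^ 2) :
    gaussianPDFReal a 1 y =
      (1 / 2 * gaussianPDFReal (-R) 1 y + 1 / 2 * gaussianPDFReal R 1 y) *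
        (exp (a * y) / cosh (R * y)) := by
  have hc : cosh (R * y) ≠ 0 := (cosh_pos _).ne'
  have key : ∀ b : ℝ, b ^ 2 = R ^ 2 → gaussianPDFReal b 1 y =
      gaussianPDFReal 0 1 y * exp (- R ^ 2 / 2) * exp (b * y) := by
    intro b hb
    simp only [gaussianPDFReal, mul_assoc, ← exp_add]
    congr 2
    simp
    rw [← hb]; ring
  rw [key a ha, key (-R) (by ring), key R rfl]
  rw [cosh_eq] at *
  field_simp
  ring_nf

open MeasureTheory Real ProbabilityTheory in
lemma aux_gauss (R a : ℝ) (ha : a ^ 2 = R ^ 2) :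
    ((1 / 2 : ENNReal) • gaussianReal (-R) 1 + (1 / 2 : ENNReal) • gaussianReal R 1).withDensity
      (fun y => ENNReal.ofReal (exp (a * y) / cosh (R * y))) = gaussianReal a 1 := by
  have hm : Measurable (fun y => ENNReal.ofReal (exp (a * y) / cosh (R * y))) := by fun_prop
  simp only [gaussianReal_of_var_ne_zero _ (one_ne_zero)]
  rw [← withDensity_smul _ (by fun_prop), ← withDensity_smul _ (by fun_prop),
    ← withDensity_add_left (by fun_prop), ← withDensity_mul _ (by fun_prop) hm]
  congr 1
  ext y
  have h2 : (1 / 2 : ENNReal) = ENNReal.ofReal (1 / 2) := by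
    rw [ENNReal.ofReal_div_of_pos (by norm_num)]; simp
  have p1 := gaussianPDFReal_nonneg (-R) 1 y
  have p2 := gaussianPDFReal_nonneg R 1 y
  simp only [Pi.mul_apply, Pi.add_apply, Pi.smul_apply, smul_eq_mul, gaussianPDF]
  rw [h2, ← ENNReal.ofReal_mul (by norm_num), ← ENNReal.ofReal_mul (by norm_num),
    ← ENNReal.ofReal_add (by positivity) (by positivity), ← ENNReal.ofReal_mul (by positivity),
    ← aux_pdf R a y ha]

open MeasureTheory Real ProbabilityTheory in
lemma aux_int (R : ℝ) : Integrable (fun z => log (cosh (R * (R + z)))) (gaussianReal 0 1) := by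
  have h1 : Integrable (fun z : ℝ => z) (gaussianReal 0 1) :=
    (memLp_id_gaussianReal 1).integrable (by norm_num)
  have h2 : Integrable (fun z : ℝ => R * (R + z)) (gaussianReal 0 1) :=
    ((integrable_const R).add h1).const_mul R
  refine h2.mono (Measurable.aestronglyMeasurable (by fun_prop)) (Filter.Eventually.of_forall fun z => ?_)
  set t := R * (R + z)
  have hp := cosh_pos t
  rw [norm_eq_abs, norm_eq_abs, abs_of_nonneg (log_nonneg (one_le_cosh t)),
    log_le_iff_le_exp hp, ← cosh_abs]
  rw [← sinh_add_cosh]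
  linarith [sinh_nonneg_iff.2 (abs_nonneg t)]

open MeasureTheory Real ProbabilityTheory in
lemma aux_val (R : ℝ) : Integrable (fun z => R * (R + z) - log (cosh (R * (R + z))))
      (gaussianReal 0 1) ∧
    ∫ z, (R * (R + z) - log (cosh (R * (R + z)))) ∂(gaussianReal 0 1) = R ^ 2 - ∫ z : ℝ,
        Real.log (Real.cosh (R * (R + z))) *
          ((2 * Real.pi) ^ (-(1 : ℝ) / 2) * Real.exp (-z ^ 2 / 2)) := by
  have h1 : Integrable (fun z : ℝ => z) (gaussianReal 0 1) :=
    (memLp_id_gaussianReal 1).integrable (by norm_num)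
  have h2 : Integrable (fun z : ℝ => R * (R + z)) (gaussianReal 0 1) :=
    ((integrable_const R).add h1).const_mul R
  refine ⟨h2.sub (aux_int R), ?_⟩
  rw [integral_sub h2 (aux_int R), integral_const_mul, integral_add (integrable_const R) h1,
    integral_id_gaussianReal]
  congr 1
  · simp; ring
  · rw [integral_gaussianReal_eq_integral_smul one_ne_zero]
    congr 1
    ext z
    simp only [gaussianPDFReal, smul_eq_mul]
    rw [mul_comm]
    congr 2
    · rw [neg_div, rpow_neg (by positivity), ← sqrt_eq_rpow]; simp
    · simp

open MeasureTheory Real ProbabilityTheory in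
theorem stmt9_aux (R : ℝ)
    {Ω : Type*} [mΩ : MeasurableSpace Ω] (P : Measure Ω) [IsProbabilityMeasure P]
    (X Z : Ω → ℝ) (hX : Measurable X) (hZ : Measurable Z)
    (hXlaw : Measure.map X P =
      (1 / 2 : ENNReal) • Measure.dirac (-R) + (1 / 2 : ENNReal) • Measure.dirac R)
    (hZlaw : Measure.map Z P = ProbabilityTheory.gaussianReal 0 1)
    (hindep : ProbabilityTheory.IndepFun X Z P)
    (Y : Ω → ℝ) (hY : ∀ ω, Y ω = X ω + Z ω) :
    Measure.map (fun ω => (X ω, Y ω)) P =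
      (1 / 2 : ENNReal) • (Measure.dirac (-R)).prod (gaussianReal (-R) 1) +
      (1 / 2 : ENNReal) • (Measure.dirac R).prod (gaussianReal R 1) := by
  have hT : Measurable (fun p : ℝ × ℝ => (p.1, p.1 + p.2)) := by fun_prop
  have e : (fun ω => (X ω, Y ω)) = (fun p : ℝ × ℝ => (p.1, p.1 + p.2)) ∘ fun ω => (X ω, Z ω) := by
    ext ω <;> simp [hY]
  rw [e, ← Measure.map_map hT (hX.prodMk hZ),
    (indepFun_iff_map_prod_eq_prod_map_map hX.aemeasurable hZ.aemeasurable).1 hindep,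
    hXlaw, hZlaw, Measure.add_prod, Measure.prod_smul_left, Measure.prod_smul_left,
    Measure.map_add _ _ hT, Measure.map_smul, Measure.map_smul]
  have key : ∀ a : ℝ, Measure.map (fun p : ℝ × ℝ => (p.1, p.1 + p.2))
      ((Measure.dirac a).prod (gaussianReal 0 1)) = (Measure.dirac a).prod (gaussianReal a 1) := by
    intro a
    have hm : Measurable (Prod.mk a : ℝ → ℝ × ℝ) := measurable_prodMk_left
    have := gaussianReal_map_const_add (μ := 0) (v := 1) a
    rw [zero_add] at this
    rw [Measure.dirac_prod, Measure.dirac_prod, Measure.map_map hT hm, ← this,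
      Measure.map_map hm (by fun_prop)]
    rfl
  rw [key, key]

/-- Let `R > 0`, `X` uniform on `{-R, R}`, `Z ~ N(0,1)` independent of `X`,
`Y = X + Z`.  Then the mutual information `I(X;Y)`, i.e. the KL divergence of the joint law
of `(X, Y)` from the product of the marginals, equals (in nats)
`R² - ∫ log(cosh(R(R+z))) (2π)^{-1/2} e^{-z²/2} dz`. -/
theorem stmt9 (R : ℝ) (hR : 0 < R)
    {Ω : Type*} [mΩ : MeasurableSpace Ω] (P : Measure Ω) [IsProbabilityMeasure P]
    (X Z : Ω → ℝ) (hX : Measurable X) (hZ : Measurable Z)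
    (hXlaw : Measure.map X P =
      (1 / 2 : ENNReal) • Measure.dirac (-R) + (1 / 2 : ENNReal) • Measure.dirac R)
    (hZlaw : Measure.map Z P = ProbabilityTheory.gaussianReal 0 1)
    (hindep : ProbabilityTheory.IndepFun X Z P)
    (Y : Ω → ℝ) (hY : ∀ ω, Y ω = X ω + Z ω) :
    klDiv (Measure.map (fun ω => (X ω, Y ω)) P)
        ((Measure.map X P).prod (Measure.map Y P)) =
      ENNReal.ofReal (R ^ 2 - ∫ z : ℝ,
        Real.log (Real.cosh (R * (R + z))) *
          ((2 * Real.pi) ^ (-(1 : ℝ) / 2) * Real.exp (-z ^ 2 / 2))) := by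
  have hjoint := stmt9_aux R P X Z hX hZ hXlaw hZlaw hindep Y hY
  have hYm : Measurable Y := by
    have : Y = fun ω => X ω + Z ω := funext hY
    rw [this]; fun_prop
  have hYlaw : Measure.map Y P = (1 / 2 : ENNReal) • ProbabilityTheory.gaussianReal (-R) 1 +
      (1 / 2 : ENNReal) • ProbabilityTheory.gaussianReal R 1 := by
    have : Measure.map Y P = Measure.map Prod.snd (Measure.map (fun ω => (X ω, Y ω)) P) := by
      rw [Measure.map_map measurable_snd (hX.prodMk hYm)]; rfl
    rw [this, hjoint, Measure.map_add _ _ measurable_snd, Measure.map_smul, Measure.map_smul,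
      Measure.map_snd_prod, Measure.map_snd_prod]
    simp
  have : IsProbabilityMeasure (Measure.map Y P) := Measure.isProbabilityMeasure_map hYm.aemeasurable
  have : IsProbabilityMeasure (Measure.map X P) := Measure.isProbabilityMeasure_map hX.aemeasurable
  set f : ℝ × ℝ → ENNReal := fun p => ENNReal.ofReal (exp (p.1 * p.2) / cosh (R * p.2)) with hfdef
  have hf : Measurable f := by fun_prop
  have hden : Measure.map (fun ω => (X ω, Y ω)) P =
      ((Measure.map X P).prod (Measure.map Y P)).withDensity f := by
    rw [hjoint, hXlaw, Measure.add_prod, Measure.prod_smul_left, Measure.prod_smul_left,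
      withDensity_add_measure, withDensity_smul_measure, withDensity_smul_measure,
      aux_dirac _ _ f hf, aux_dirac _ _ f hf, hYlaw]
    simp only [hfdef]
    rw [aux_gauss R (-R) (by ring), aux_gauss R R rfl]
  set μ := Measure.map (fun ω => (X ω, Y ω)) P with hμ
  set ν := (Measure.map X P).prod (Measure.map Y P) with hν
  have hac : μ ≪ ν := by rw [hden]; exact withDensity_absolutelyContinuous _ _
  set g : ℝ × ℝ → ℝ := fun p => p.1 * p.2 - log (cosh (R * p.2)) with hg
  have hgm : Measurable g := by fun_prop
  have hllr : llr μ ν =ᵐ[μ] g := by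
    have h1 : μ.rnDeriv ν =ᵐ[ν] f := by rw [hden]; exact Measure.rnDeriv_withDensity ν hf
    filter_upwards [hac.ae_le h1] with p hp
    have hc := cosh_pos (R * p.2)
    rw [llr, hp, hfdef, hg]
    simp only
    rw [ENNReal.toReal_ofReal (by positivity), log_div (exp_pos _).ne' hc.ne', log_exp]
  have hplus : (Measure.dirac R).prod (ProbabilityTheory.gaussianReal R 1) =
      Measure.map (fun z => (R, R + z)) (ProbabilityTheory.gaussianReal 0 1) := by
    have := ProbabilityTheory.gaussianReal_map_const_add (μ := 0) (v := 1) R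
    rw [zero_add] at this
    rw [Measure.dirac_prod, ← this, Measure.map_map (by fun_prop) (by fun_prop)]
    rfl
  have hminus : (Measure.dirac (-R)).prod (ProbabilityTheory.gaussianReal (-R) 1) =
      Measure.map (fun z => (-R, -(R + z))) (ProbabilityTheory.gaussianReal 0 1) := by
    have := ProbabilityTheory.gaussianReal_map_const_add (μ := 0) (v := 1) R
    rw [zero_add] at this
    rw [Measure.dirac_prod, ← ProbabilityTheory.gaussianReal_map_neg, ← this,
      Measure.map_map (by fun_prop) (by fun_prop), Measure.map_map (by fun_prop) (by fun_prop)]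
    rfl
  obtain ⟨hi, hv⟩ := aux_val R
  have gp : (fun z => g (R, R + z)) = fun z => R * (R + z) - log (cosh (R * (R + z))) := by
    ext z; simp [hg]
  have gm : (fun z => g (-R, -(R + z))) = fun z => R * (R + z) - log (cosh (R * (R + z))) := by
    ext z
    simp only [hg]
    rw [mul_neg, neg_mul, neg_neg, mul_neg, cosh_neg]
  have mp : Measurable (fun z : ℝ => (R, R + z)) := by fun_prop
  have mm : Measurable (fun z : ℝ => (-R, -(R + z))) := by fun_prop
  have ip : Integrable g (Measure.map (fun z => (R, R + z)) (ProbabilityTheory.gaussianReal 0 1)) := by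
    rw [integrable_map_measure hgm.aestronglyMeasurable mp.aemeasurable]
    change Integrable (fun z => g (R, R + z)) _
    rw [gp]; exact hi
  have im : Integrable g
      (Measure.map (fun z => (-R, -(R + z))) (ProbabilityTheory.gaussianReal 0 1)) := by
    rw [integrable_map_measure hgm.aestronglyMeasurable mm.aemeasurable]
    change Integrable (fun z => g (-R, -(R + z))) _
    rw [gm]; exact hi
  rw [hplus, hminus] at hjoint
  have ip' := ip.smul_measure (c := (1 / 2 : ENNReal)) (by simp)
  have im' := im.smul_measure (c := (1 / 2 : ENNReal)) (by simp)
  have hgi : Integrable g μ := by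
    rw [hjoint]; exact im'.add_measure ip'
  rw [klDiv, if_pos ⟨hac, (integrable_congr hllr).2 hgi⟩, integral_congr_ae hllr, ← hv]
  congr 1
  rw [hjoint, integral_add_measure im' ip', integral_smul_measure, integral_smul_measure,
    integral_map mp.aemeasurable hgm.aestronglyMeasurable,
    integral_map mm.aemeasurable hgm.aestronglyMeasurable, gp, gm]
  simp
  ring
end

section
/- There exists R ∈ (1.665, 1.666) such that ∫_ℝ (Q(w−R) − Q(w)) tanh(R w) dw = R/2. -/
open MeasureTheory Real

/-- The standard Gaussian tail function `Q(x) = ∫_x^∞ (2π)^{-1/2} e^{-t²/2} dt`. -/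
noncomputable def gaussQ (x : ℝ) : ℝ :=
  ∫ t in Set.Ioi x, (2 * Real.pi) ^ (-(1 : ℝ) / 2) * Real.exp (-t ^ 2 / 2)

/-! ### The moment integrals and their recursion -/

noncomputable def mom (n : ℕ) (t : ℝ) : ℝ :=
  ∫ z in Set.Ioi (0 : ℝ), z ^ n * Real.exp (-t * z - z ^ 2 / 2)

lemma mom_integrable (n : ℕ) (t : ℝ) :
    Integrable (fun z : ℝ => z ^ n * Real.exp (-t * z - z ^ 2 / 2)) := by
  have h := (integrable_rpow_mul_exp_neg_mul_sq (b := 1 / 4) (by norm_num) (s := (n : ℝ))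
    (by have : (0 : ℝ) ≤ n := Nat.cast_nonneg n
        linarith)).const_mul (Real.exp (t ^ 2))
  refine h.mono (by fun_prop) (Filter.Eventually.of_forall fun z => ?_)
  rw [Real.rpow_natCast, norm_mul, norm_mul, norm_mul, Real.norm_of_nonneg (exp_pos _).le,
    Real.norm_of_nonneg (exp_pos _).le, Real.norm_of_nonneg (exp_pos _).le]
  have : Real.exp (-t * z - z ^ 2 / 2) ≤ Real.exp (t ^ 2) * Real.exp (-(1 / 4) * z ^ 2) := by
    rw [← Real.exp_add]
    apply Real.exp_le_exp.2
    nlinarith [sq_nonneg (t + z / 2)]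
  calc _ ≤ ‖z ^ n‖ * (Real.exp (t ^ 2) * Real.exp (-(1 / 4) * z ^ 2)) := by gcongr
    _ = _ := by ring

lemma mom_hasDeriv (n : ℕ) (t z : ℝ) :
    HasDerivAt (fun z : ℝ => z ^ n * Real.exp (-t * z - z ^ 2 / 2))
      ((n : ℝ) * (z ^ (n - 1) * Real.exp (-t * z - z ^ 2 / 2))
        + (-t) * (z ^ n * Real.exp (-t * z - z ^ 2 / 2))
        + (-1) * (z ^ (n + 1) * Real.exp (-t * z - z ^ 2 / 2))) z := by
  have h1 : HasDerivAt (fun z : ℝ => -t * z - z ^ 2 / 2) (-t - z) z := by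
    have := ((hasDerivAt_id z).const_mul (-t)).sub ((hasDerivAt_pow 2 z).div_const 2)
    exact this.congr_deriv (by simp)
  exact ((hasDerivAt_pow n z).mul h1.exp).congr_deriv (by ring)

lemma mom_rec_aux (n : ℕ) (t : ℝ) :
    (n : ℝ) * mom (n - 1) t + (-t) * mom n t + (-1) * mom (n + 1) t = - (0 : ℝ) ^ n := by
  have i1 := ((mom_integrable (n - 1) t).const_mul (n : ℝ)).integrableOn (s := Set.Ioi 0)
  have i2 := ((mom_integrable n t).const_mul (-t)).integrableOn (s := Set.Ioi 0)
  have i3 := ((mom_integrable (n + 1) t).const_mul (-1)).integrableOn (s := Set.Ioi 0)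
  have hd := fun z (_ : z ∈ Set.Ioi (0 : ℝ)) => mom_hasDeriv n t z
  have i := (i1.add i2).add i3
  have lim := tendsto_zero_of_hasDerivAt_of_integrableOn_Ioi hd i
    (mom_integrable n t).integrableOn
  have := integral_Ioi_of_hasDerivAt_of_tendsto
    (mom_hasDeriv n t 0).continuousAt.continuousWithinAt hd i lim
  have e1 := integral_add (i1.add i2) i3
  have e2 := integral_add i1 i2
  simp only [Pi.add_apply] at e1 e2
  rw [e1, e2, integral_const_mul, integral_const_mul, integral_const_mul] at this
  simpa [mom] using this

lemma mom_one (t : ℝ) : mom 1 t = 1 - t * mom 0 t := by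
  have := mom_rec_aux 0 t
  simp at this
  linarith

lemma mom_rec (n : ℕ) (t : ℝ) : mom (n + 2) t = (n + 1) * mom n t - t * mom (n + 1) t := by
  have := mom_rec_aux (n + 1) t
  simp at this
  linarith

lemma mom_nonneg (n : ℕ) (t : ℝ) : 0 ≤ mom n t := by
  apply setIntegral_nonneg measurableSet_Ioi
  intro z hz
  have : (0 : ℝ) < z := hz
  positivity

def cfrac (t : ℚ) : ℕ → (ℚ × ℚ) × (ℚ × ℚ)
  | 0 => ((1, 0), (t, 1))
  | n + 1 => ((cfrac t n).2,
      (((n : ℚ) + 1) * (cfrac t n).1.1 + t * (cfrac t n).2.1,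
        ((n : ℚ) + 1) * (cfrac t n).1.2 + t * (cfrac t n).2.2))

lemma cfrac_pos (t : ℚ) (ht : 0 < t) (n : ℕ) : 0 < (cfrac t n).1.1 ∧ 0 < (cfrac t n).2.1 := by
  induction n with
  | zero => simp [cfrac, ht]
  | succ n ih =>
    obtain ⟨h1, h2⟩ := ih
    refine ⟨h2, ?_⟩
    simp only [cfrac]
    positivity

lemma mom_cfrac (t : ℚ) (n : ℕ) :
    mom n t = (-1) ^ n * ((cfrac t n).1.1 * mom 0 t - (cfrac t n).1.2) ∧
    mom (n + 1) t = (-1) ^ (n + 1) * ((cfrac t n).2.1 * mom 0 t - (cfrac t n).2.2) := by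
  induction n with
  | zero => simp [cfrac, mom_one]
  | succ n ih =>
    obtain ⟨h1, h2⟩ := ih
    refine ⟨h2, ?_⟩
    rw [mom_rec, h1, h2]
    simp only [cfrac]
    push_cast
    ring

lemma mom_lower (t : ℚ) (ht : 0 < t) (n : ℕ) (lo : ℚ)
    (h : lo * (cfrac t (2 * n)).1.1 ≤ (cfrac t (2 * n)).1.2) : (lo : ℝ) ≤ mom 0 t := by
  have h1 := (mom_cfrac t (2 * n)).1
  have h2 := mom_nonneg (2 * n) t
  have h3 : (0 : ℝ) < (cfrac t (2 * n)).1.1 := by exact_mod_cast (cfrac_pos t ht _).1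
  rw [h1, pow_mul] at h2
  have h' : (lo : ℝ) * (cfrac t (2 * n)).1.1 ≤ (cfrac t (2 * n)).1.2 := by exact_mod_cast h
  norm_num at h2
  by_contra! hc
  nlinarith

lemma mom_upper (t : ℚ) (ht : 0 < t) (n : ℕ) (hi : ℚ)
    (h : (cfrac t (2 * n)).2.2 ≤ hi * (cfrac t (2 * n)).2.1) : mom 0 t ≤ (hi : ℝ) := by
  have h1 := (mom_cfrac t (2 * n)).2
  have h2 := mom_nonneg (2 * n + 1) t
  have h3 : (0 : ℝ) < (cfrac t (2 * n)).2.1 := by exact_mod_cast (cfrac_pos t ht _).2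
  rw [h1, pow_succ, pow_mul] at h2
  have h' : ((cfrac t (2 * n)).2.2 : ℝ) ≤ hi * (cfrac t (2 * n)).2.1 := by exact_mod_cast h
  norm_num at h2
  by_contra! hc
  nlinarith

lemma mom_bounds (t : ℚ) (n : ℕ) (lo hi : ℚ)
    (h : 0 < t ∧ lo * (cfrac t (2 * n)).1.1 ≤ (cfrac t (2 * n)).1.2 ∧
      (cfrac t (2 * n)).2.2 ≤ hi * (cfrac t (2 * n)).2.1) :
    (lo : ℝ) ≤ mom 0 t ∧ mom 0 t ≤ (hi : ℝ) :=
  ⟨mom_lower t h.1 n lo h.2.1, mom_upper t h.1 n hi h.2.2⟩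

/-! ### Approximation of the logarithm -/

noncomputable def pp (u : ℝ) : ℝ :=
  19600/19601 * u - 9764/19601 * u^2 + 18688/58803 * u^3 - 3776/19601 * u^4
    + 8192/98005 * u^5 - 1024/58803 * u^6

lemma log_approx (u : ℝ) (h0 : 0 ≤ u) (h1 : u ≤ 1) : |Real.log (1 + u) - pp u| ≤ u / 19601 := by
  have hd : ∀ x ∈ Set.Icc (0 : ℝ) 1, HasDerivWithinAt (fun u => Real.log (1 + u) - pp u)
      ((2 * (4 * (2 * x - 1) ^ 3 - 3 * (2 * x - 1)) ^ 2 - 1) / (19601 * (1 + x)))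
      (Set.Icc 0 1) x := by
    intro x hx
    have hx0 : 0 < 1 + x := by linarith [hx.1]
    have e1 : HasDerivAt (fun u : ℝ => Real.log (1 + u)) (1 / (1 + x)) x :=
      ((hasDerivAt_id x).const_add 1).log hx0.ne'
    have e2 : HasDerivAt pp (19600/19601 * 1 - 9764/19601 * (2 * x)
        + 18688/58803 * (3 * x^2) - 3776/19601 * (4 * x^3)
        + 8192/98005 * (5 * x^4) - 1024/58803 * (6 * x^5)) x := by
      have p := fun n : ℕ => hasDerivAt_pow n x
      exact (((((((hasDerivAt_id x).const_mul (19600/19601)).sub ((p 2).const_mul (9764/19601))).add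
        ((p 3).const_mul (18688/58803))).sub ((p 4).const_mul (3776/19601))).add
        ((p 5).const_mul (8192/98005))).sub ((p 6).const_mul (1024/58803))).congr_deriv (by norm_num)
    refine ((e1.sub e2).congr_deriv ?_).hasDerivWithinAt
    field_simp
    ring
  have hb : ∀ x ∈ Set.Icc (0 : ℝ) 1,
      ‖(2 * (4 * (2 * x - 1) ^ 3 - 3 * (2 * x - 1)) ^ 2 - 1) / (19601 * (1 + x))‖ ≤ 1 / 19601 := by
    intro x hx
    rw [norm_div, Real.norm_of_nonneg (show 0 ≤ 19601 * (1 + x) by linarith [hx.1])]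
    have : ‖2 * (4 * (2 * x - 1) ^ 3 - 3 * (2 * x - 1)) ^ 2 - 1‖ ≤ 1 := by
      rw [Real.norm_eq_abs, abs_le]
      constructor
      · nlinarith [sq_nonneg (4 * (2 * x - 1) ^ 3 - 3 * (2 * x - 1))]
      · have : 0 ≤ (4 * x * (1 - x)) * (1 - 4 * (2 * x - 1) ^ 2) ^ 2 := by
          have := hx.1
          have : 0 ≤ 1 - x := by linarith [hx.2]
          have := hx.1
          positivity
        nlinarith
    rw [div_le_div_iff₀ (by linarith [hx.1]) (by norm_num)]
    nlinarith [hx.1]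
  have := (convex_Icc (0 : ℝ) 1).norm_image_sub_le_of_norm_hasDerivWithin_le hd hb
    (show (0 : ℝ) ∈ Set.Icc (0 : ℝ) 1 by simp) (show u ∈ Set.Icc (0 : ℝ) 1 from ⟨h0, h1⟩)
  simp [pp, abs_of_nonneg h0] at this ⊢
  linarith

/-! ### Reduction of the integral -/

noncomputable def cc : ℝ := (2 * Real.pi) ^ (-(1 : ℝ) / 2)

lemma cc_pos : 0 < cc := by unfold cc; positivity

lemma cc_eq : cc * √(2 * π) = 1 := by
  rw [cc, Real.sqrt_eq_rpow, ← Real.rpow_add (by positivity)]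
  norm_num

lemma gauss_integrable : Integrable (fun t : ℝ => cc * Real.exp (-t ^ 2 / 2)) := by
  have := (integrable_exp_neg_mul_sq (b := 1 / 2) (by norm_num)).const_mul cc
  refine this.congr (Filter.Eventually.of_forall fun t => ?_)
  simp only
  congr 2
  ring

lemma gaussQ_sub (a b : ℝ) :
    gaussQ a - gaussQ b = ∫ t in a..b, cc * Real.exp (-t ^ 2 / 2) := by
  have := intervalIntegral.integral_interval_add_Ioi (a := a) (b := b)
    (gauss_integrable.integrableOn) (gauss_integrable.integrableOn)
  unfold gaussQ
  change (∫ t in Set.Ioi a, cc * Real.exp (-t ^ 2 / 2)) -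
    (∫ t in Set.Ioi b, cc * Real.exp (-t ^ 2 / 2)) = _
  linarith

lemma gaussQ_hasDeriv (x : ℝ) : HasDerivAt gaussQ (-(cc * Real.exp (-x ^ 2 / 2))) x := by
  have h : gaussQ = fun x => gaussQ 0 - ∫ t in (0 : ℝ)..x, cc * Real.exp (-t ^ 2 / 2) := by
    funext y
    rw [← gaussQ_sub]; ring
  rw [h]
  apply HasDerivAt.const_sub
  have hc : Continuous (fun t : ℝ => cc * Real.exp (-t ^ 2 / 2)) := by fun_prop
  exact intervalIntegral.integral_hasDerivAt_right (hc.intervalIntegrable _ _)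
    hc.aestronglyMeasurable.stronglyMeasurableAtFilter hc.continuousAt

lemma gaussQ_cont : Continuous gaussQ :=
  continuous_iff_continuousAt.2 fun x => (gaussQ_hasDeriv x).continuousAt

lemma diff_bound (R w : ℝ) (h0 : 0 ≤ R) (h2 : R ≤ 2) :
    |gaussQ (w - R) - gaussQ w| ≤ 2 * cc * Real.exp 2 * Real.exp (-(1 / 4) * w ^ 2) := by
  rw [gaussQ_sub]
  have := intervalIntegral.norm_integral_le_of_norm_le_const (a := w - R) (b := w)
    (f := fun t => cc * Real.exp (-t ^ 2 / 2))
    (C := cc * (Real.exp 2 * Real.exp (-(1 / 4) * w ^ 2))) ?_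
  · rw [Real.norm_eq_abs] at this
    refine this.trans ?_
    have e : |w - (w - R)| = R := by rw [sub_sub_cancel, abs_of_nonneg h0]
    rw [e]
    have : 0 ≤ cc * (Real.exp 2 * Real.exp (-(1 / 4) * w ^ 2)) := by
      have := cc_pos; positivity
    nlinarith
  · intro t ht
    rw [Set.uIoc_of_le (by linarith)] at ht
    rw [Real.norm_of_nonneg (by have := cc_pos; positivity)]
    have := cc_pos
    gcongr
    rw [← Real.exp_add]
    apply Real.exp_le_exp.2
    have h1 : 0 ≤ w - t := by linarith [ht.2]
    have h3 : w - t ≤ 2 := by linarith [ht.1]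
    nlinarith [sq_nonneg (w - 2 * t), mul_nonneg h1 (sub_nonneg.2 h3), sq_nonneg (w - 2 * (w - t))]

lemma tanh_cont : Continuous Real.tanh := by
  have : Real.tanh = fun x => Real.sinh x / Real.cosh x := by
    funext x; exact Real.tanh_eq_sinh_div_cosh x
  rw [this]
  exact Real.continuous_sinh.div Real.continuous_cosh fun x => (Real.cosh_pos x).ne'

lemma bound_integrable : Integrable
    (fun w : ℝ => 2 * cc * Real.exp 2 * Real.exp (-(1 / 4) * w ^ 2)) :=
  (integrable_exp_neg_mul_sq (b := 1 / 4) (by norm_num)).const_mul _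

lemma F_cont : ContinuousOn
    (fun R : ℝ => ∫ w : ℝ, (gaussQ (w - R) - gaussQ w) * Real.tanh (R * w)) (Set.Icc 0 2) := by
  have := gaussQ_cont
  have := tanh_cont
  apply continuousOn_of_dominated
    (bound := fun w : ℝ => 2 * cc * Real.exp 2 * Real.exp (-(1 / 4) * w ^ 2))
  · intro R hR
    exact Continuous.aestronglyMeasurable (by fun_prop)
  · intro R hR
    refine Filter.Eventually.of_forall fun w => ?_
    rw [norm_mul, Real.norm_eq_abs, Real.norm_eq_abs]
    have h1 := diff_bound R w hR.1 hR.2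
    have h2 := (Real.abs_tanh_lt_one (R * w)).le
    nlinarith [abs_nonneg (gaussQ (w - R) - gaussQ w)]
  · exact bound_integrable
  · exact Filter.Eventually.of_forall fun w => Continuous.continuousOn (by fun_prop)

lemma logcosh_bound (x : ℝ) : |Real.log (Real.cosh x)| ≤ |x| := by
  rw [abs_of_nonneg (Real.log_nonneg (Real.one_le_cosh x)),
    Real.log_le_iff_le_exp (Real.cosh_pos x), ← Real.cosh_abs, Real.cosh_eq]
  have : Real.exp (-|x|) ≤ Real.exp |x| := Real.exp_le_exp.2 (by linarith [abs_nonneg x])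
  linarith

lemma logcosh_deriv (R w : ℝ) :
    HasDerivAt (fun w => Real.log (Real.cosh (R * w))) (R * Real.tanh (R * w)) w := by
  have h1 : HasDerivAt (fun w : ℝ => R * w) R w := by
    simpa using (hasDerivAt_id w).const_mul R
  refine ((h1.cosh).log (Real.cosh_pos _).ne').congr_deriv ?_
  rw [Real.tanh_eq_sinh_div_cosh]
  ring

lemma logcosh_cont (R : ℝ) : Continuous (fun w => Real.log (Real.cosh (R * w))) :=
  continuous_iff_continuousAt.2 fun w => (logcosh_deriv R w).continuousAt

lemma shift_eq (R w : ℝ) :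
    Real.exp (-(w - R) ^ 2 / 2) = Real.exp (-(R ^ 2 / 2)) * Real.exp (-(-R) * w - w ^ 2 / 2) := by
  rw [← Real.exp_add]
  congr 1
  ring

lemma mom_log_integrable (R t : ℝ) :
    Integrable (fun w : ℝ => Real.exp (-t * w - w ^ 2 / 2) * Real.log (Real.cosh (R * w))) := by
  have := logcosh_cont R
  refine ((mom_integrable 1 t).const_mul R).mono
    (Continuous.aestronglyMeasurable (by fun_prop)) (Filter.Eventually.of_forall fun w => ?_)
  have h := logcosh_bound (R * w)
  rw [norm_mul, Real.norm_eq_abs, Real.norm_eq_abs, norm_mul, norm_mul, Real.norm_eq_abs,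
    Real.norm_eq_abs, Real.norm_eq_abs, pow_one, abs_of_pos (Real.exp_pos _)]
  rw [abs_mul] at h
  nlinarith [Real.exp_pos (-t * w - w ^ 2 / 2)]

lemma F_eq (R : ℝ) (h0 : 0 ≤ R) (h2 : R ≤ 2) :
    R * (∫ w : ℝ, (gaussQ (w - R) - gaussQ w) * Real.tanh (R * w)) =
      cc * ∫ w : ℝ, (Real.exp (-(R ^ 2 / 2)) * Real.exp (-(-R) * w - w ^ 2 / 2)
        - Real.exp (-0 * w - w ^ 2 / 2)) * Real.log (Real.cosh (R * w)) := by
  have c1 := gaussQ_cont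
  have c2 := tanh_cont
  have c3 := logcosh_cont R
  have hb := fun w => diff_bound R w h0 h2
  have key := integral_mul_deriv_eq_deriv_mul_of_integrable
    (u := fun w => gaussQ (w - R) - gaussQ w)
    (u' := fun w => -(cc * Real.exp (-(w - R) ^ 2 / 2)) - -(cc * Real.exp (-w ^ 2 / 2)))
    (v := fun w => Real.log (Real.cosh (R * w)))
    (v' := fun w => R * Real.tanh (R * w))
    (fun w _ => by
      have := (gaussQ_hasDeriv (w - R)).comp_sub_const w R
      exact this.sub (gaussQ_hasDeriv w))
    (fun w _ => logcosh_deriv R w) ?_ ?_ ?_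
  · rw [← integral_const_mul, ← integral_const_mul]
    have e1 : ∀ w, R * ((gaussQ (w - R) - gaussQ w) * Real.tanh (R * w)) =
      (gaussQ (w - R) - gaussQ w) * (R * Real.tanh (R * w)) := fun w => by ring
    simp_rw [e1]
    rw [key, ← integral_neg]
    congr 1
    funext w
    rw [shift_eq]
    have : Real.exp (-0 * w - w ^ 2 / 2) = Real.exp (-w ^ 2 / 2) := by congr 1; ring
    rw [this]
    ring
  · refine (bound_integrable.const_mul R).mono
      (Continuous.aestronglyMeasurable (by fun_prop)) (Filter.Eventually.of_forall fun w => ?_)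
    have h2 := (Real.abs_tanh_lt_one (R * w)).le
    have h3 := hb w
    simp only [Pi.mul_apply, norm_mul, Real.norm_eq_abs, abs_of_pos (Real.exp_pos _),
      abs_of_pos cc_pos, abs_of_nonneg h0, abs_two] at *
    calc _ ≤ (2 * cc * Real.exp 2 * Real.exp (-(1 / 4) * w ^ 2)) * (R * 1) := by
          have := cc_pos
          gcongr
      _ = _ := by ring
  · have i1 := (mom_log_integrable R (-R)).const_mul (-(cc * Real.exp (-(R ^ 2 / 2))))
    have i2 := (mom_log_integrable R 0).const_mul cc
    refine (i1.add i2).congr (Filter.Eventually.of_forall fun w => ?_)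
    have : Real.exp (-0 * w - w ^ 2 / 2) = Real.exp (-w ^ 2 / 2) := by congr 1; ring
    simp only [Pi.add_apply, Pi.mul_apply]
    rw [shift_eq, this]
    ring
  · have i1 := (((integrable_mul_exp_neg_mul_sq (b := 1 / 4) (by norm_num)).const_mul
      (2 * cc * Real.exp 2)).const_mul R)
    refine i1.mono
      (Continuous.aestronglyMeasurable (by fun_prop)) (Filter.Eventually.of_forall fun w => ?_)
    have h2 := logcosh_bound (R * w)
    have h3 := hb w
    simp only [Pi.mul_apply, norm_mul, Real.norm_eq_abs, abs_mul, abs_of_pos (Real.exp_pos _),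
      abs_of_pos cc_pos, abs_of_nonneg h0, abs_two] at *
    calc _ ≤ (2 * cc * Real.exp 2 * Real.exp (-(1 / 4) * w ^ 2)) * (R * |w|) := by
          have := cc_pos
          gcongr
      _ = _ := by ring

lemma log_split (R w : ℝ) :
    Real.log (Real.cosh (R * w)) = R * w - Real.log 2 + Real.log (1 + Real.exp (-(2 * R * w))) := by
  have : Real.cosh (R * w) = Real.exp (R * w) / 2 * (1 + Real.exp (-(2 * R * w))) := by
    rw [Real.cosh_eq, show -(R * w) = R * w + -(2 * R * w) by ring, Real.exp_add]
    ring
  rw [this, Real.log_mul (by positivity) (by positivity), Real.log_div (by positivity) two_ne_zero,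
    Real.log_exp]

lemma fold (f : ℝ → ℝ) (hf : Integrable f) :
    ∫ w, f w = ∫ w in Set.Ioi (0 : ℝ), (f w + f (-w)) := by
  rw [integral_add hf.integrableOn hf.comp_neg.integrableOn, integral_comp_neg_Ioi, neg_zero,
    add_comm, intervalIntegral.integral_Iic_add_Ioi hf.integrableOn hf.integrableOn]

lemma mom_zero_zero : 2 * mom 0 0 = √(2 * π) := by
  have := integral_gaussian_Ioi (1 / 2)
  have e : mom 0 0 = ∫ x in Set.Ioi (0 : ℝ), Real.exp (-(1 / 2) * x ^ 2) := by
    unfold mom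
    congr 1
    funext z
    rw [pow_zero, one_mul]
    congr 1
    ring
  rw [e, this, show π / (1 / 2) = 2 * π by ring]
  ring

lemma mom_reflect (R : ℝ) :
    Real.exp (-(R ^ 2 / 2)) * (mom 0 (-R) + mom 0 R) = √(2 * π) := by
  have h1 : ∫ w : ℝ, Real.exp (-(w - R) ^ 2 / 2) = √(2 * π) := by
    rw [integral_sub_right_eq_self (fun w : ℝ => Real.exp (-w ^ 2 / 2)) R]
    have := integral_gaussian (1 / 2)
    rw [show π / (1 / 2) = 2 * π by ring] at this
    rw [← this]
    congr 1
    funext w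
    congr 1
    ring
  have i1 : Integrable (fun w : ℝ => w ^ 0 * Real.exp (-(-R) * w - w ^ 2 / 2)) :=
    mom_integrable 0 (-R)
  have i2 := mom_integrable 0 R
  rw [← h1]
  simp_rw [shift_eq]
  rw [integral_const_mul]
  congr 1
  have := fold _ i1
  simp only [pow_zero, one_mul] at this
  rw [this]
  unfold mom
  rw [← integral_add i1.integrableOn i2.integrableOn]
  congr 1
  funext w
  simp only [pow_zero, one_mul]
  congr 2
  ring

def HI (f : ℝ → ℝ) (v : ℝ) : Prop :=
  IntegrableOn f (Set.Ioi 0) ∧ ∫ z in Set.Ioi (0 : ℝ), f z = v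

lemma HI.add {f g : ℝ → ℝ} {a b : ℝ} (hf : HI f a) (hg : HI g b) :
    HI (fun z => f z + g z) (a + b) :=
  ⟨hf.1.add hg.1, by rw [integral_add hf.1 hg.1, hf.2, hg.2]⟩

lemma HI.smul {f : ℝ → ℝ} {a : ℝ} (c : ℝ) (hf : HI f a) : HI (fun z => c * f z) (c * a) :=
  ⟨hf.1.const_mul c, by rw [integral_const_mul, hf.2]⟩

lemma HI_mom (n : ℕ) (t : ℝ) : HI (fun z => z ^ n * Real.exp (-t * z - z ^ 2 / 2)) (mom n t) :=
  ⟨(mom_integrable n t).integrableOn, rfl⟩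

noncomputable def KK (s R w : ℝ) : ℝ :=
  Real.exp (-(R ^ 2 / 2)) * (Real.exp (-(-R) * w - w ^ 2 / 2) + Real.exp (-R * w - w ^ 2 / 2))
    + s * Real.exp (-0 * w - w ^ 2 / 2)

lemma HI_KK (s R : ℝ) (n k : ℕ) :
    HI (fun w => w ^ n * KK s R w * Real.exp (-(2 * R * w)) ^ k)
      (Real.exp (-(R ^ 2 / 2)) * (mom n ((2 * k - 1) * R) + mom n ((2 * k + 1) * R))
        + s * mom n ((2 * k) * R)) := by
  have h := (((HI_mom n ((2 * k - 1) * R)).add (HI_mom n ((2 * k + 1) * R))).smul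
    (Real.exp (-(R ^ 2 / 2)))).add ((HI_mom n ((2 * k) * R)).smul s)
  convert h using 1
  funext w
  have e1 : Real.exp (-((2 * k - 1) * R) * w - w ^ 2 / 2)
      = Real.exp (-(-R) * w - w ^ 2 / 2) * Real.exp (-(2 * R * w)) ^ k := by
    rw [← Real.exp_nat_mul, ← Real.exp_add]
    congr 1
    ring
  have e2 : Real.exp (-((2 * k + 1) * R) * w - w ^ 2 / 2)
      = Real.exp (-R * w - w ^ 2 / 2) * Real.exp (-(2 * R * w)) ^ k := by
    rw [← Real.exp_nat_mul, ← Real.exp_add]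
    congr 1
    ring
  have e3 : Real.exp (-((2 * k) * R) * w - w ^ 2 / 2)
      = Real.exp (-0 * w - w ^ 2 / 2) * Real.exp (-(2 * R * w)) ^ k := by
    rw [← Real.exp_nat_mul, ← Real.exp_add]
    congr 1
    ring
  rw [e1, e2, e3, KK]
  ring

noncomputable def momX (R : ℝ) : ℝ :=
  2 * R - 2 * R ^ 2 * mom 0 (1 * R)
    + 19600/19601 * (mom 0 (1 * R) + mom 0 (3 * R))
    - 9764/19601 * (mom 0 (3 * R) + mom 0 (5 * R))
    + 18688/58803 * (mom 0 (5 * R) + mom 0 (7 * R))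
    - 3776/19601 * (mom 0 (7 * R) + mom 0 (9 * R))
    + 8192/98005 * (mom 0 (9 * R) + mom 0 (11 * R))
    - 1024/58803 * (mom 0 (11 * R) + mom 0 (13 * R))

noncomputable def momY (R : ℝ) : ℝ :=
  19600/19601 * mom 0 (2 * R) - 9764/19601 * mom 0 (4 * R) + 18688/58803 * mom 0 (6 * R)
    - 3776/19601 * mom 0 (8 * R) + 8192/98005 * mom 0 (10 * R) - 1024/58803 * mom 0 (12 * R)

lemma main_approx (R : ℝ) (h0 : 0 ≤ R) (h2 : R ≤ 2) :
    |√(2 * π) * (R * (∫ w : ℝ, (gaussQ (w - R) - gaussQ w) * Real.tanh (R * w))) -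
      (√(2 * π) * R ^ 2 + Real.exp (-(R ^ 2 / 2)) * momX R - 2 * R - 2 * momY R)| ≤
    (Real.exp (-(R ^ 2 / 2)) * (mom 0 (1 * R) + mom 0 (3 * R)) + 2 * mom 0 (2 * R)) / 19601 := by
  set E := Real.exp (-(R ^ 2 / 2)) with hE
  rw [F_eq R h0 h2, ← mul_assoc, mul_comm (√(2 * π)), cc_eq, one_mul]
  rw [fold _ (by
    refine (((mom_log_integrable R (-R)).const_mul E).add
      ((mom_log_integrable R 0).const_mul (-1))).congr (Filter.Eventually.of_forall fun w => ?_)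
    simp only [Pi.add_apply]
    ring)]
  have e1 : ∀ w : ℝ, (E * Real.exp (-(-R) * w - w ^ 2 / 2)
        - Real.exp (-0 * w - w ^ 2 / 2)) * Real.log (Real.cosh (R * w)) +
      (E * Real.exp (-(-R) * (-w) - (-w) ^ 2 / 2)
        - Real.exp (-0 * (-w) - (-w) ^ 2 / 2)) * Real.log (Real.cosh (R * (-w))) =
      KK (-2) R w * Real.log (Real.cosh (R * w)) := by
    intro w
    rw [mul_neg R w, Real.cosh_neg, KK]
    have a1 : -(-R) * (-w) - (-w) ^ 2 / 2 = -R * w - w ^ 2 / 2 := by ring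
    have a2 : -0 * (-w) - (-w) ^ 2 / 2 = -0 * w - w ^ 2 / 2 := by ring
    rw [a1, a2]
    ring
  simp only [← hE, e1]
  -- the explicit part
  have H := ((((((((HI_KK (-2) R 1 0).smul R).add ((HI_KK (-2) R 0 0).smul (-Real.log 2))).add
    ((HI_KK (-2) R 0 1).smul (19600/19601))).add
    ((HI_KK (-2) R 0 2).smul (-(9764/19601)))).add
    ((HI_KK (-2) R 0 3).smul (18688/58803))).add
    ((HI_KK (-2) R 0 4).smul (-(3776/19601)))).add
    ((HI_KK (-2) R 0 5).smul (8192/98005))).add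
    ((HI_KK (-2) R 0 6).smul (-(1024/58803)))
  have HP : HI (fun w => KK (-2) R w * (R * w - Real.log 2 + pp (Real.exp (-(2 * R * w)))))
      (√(2 * π) * R ^ 2 + E * momX R - 2 * R - 2 * momY R) := by
    convert H using 1
    · funext w
      unfold pp
      ring
    · have r1 := mom_reflect R
      have r2 := mom_zero_zero
      have m1 := mom_one R
      have m2 := mom_one (-R)
      have m3 := mom_one 0
      rw [← hE] at *
      norm_num at *
      rw [m1, m2, m3]
      unfold momX momY
      simp only [one_mul]
      linear_combination (-R ^ 2 + Real.log 2) * r1 - Real.log 2 * r2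
  -- the error part
  have HB : HI (fun w => 1 / 19601 * (w ^ 0 * KK 2 R w * Real.exp (-(2 * R * w)) ^ 1))
      (1 / 19601 * (E * (mom 0 (1 * R) + mom 0 (3 * R)) + 2 * mom 0 (2 * R))) := by
    have := (HI_KK 2 R 0 1).smul (1 / 19601)
    norm_num at this ⊢
    exact this
  have iL : IntegrableOn (fun w => KK (-2) R w * Real.log (Real.cosh (R * w))) (Set.Ioi 0) := by
    refine ((((mom_log_integrable R (-R)).const_mul E).add
      ((mom_log_integrable R R).const_mul E)).add
      ((mom_log_integrable R 0).const_mul (-2))).integrableOn.congr_fun (fun w _ => ?_)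
        measurableSet_Ioi
    simp only [Pi.add_apply, KK]
    ring
  rw [← HP.2, ← integral_sub iL HP.1]
  have := norm_integral_le_of_norm_le (μ := volume.restrict (Set.Ioi (0 : ℝ))) HB.1
    (f := fun w => KK (-2) R w * Real.log (Real.cosh (R * w)) -
      KK (-2) R w * (R * w - Real.log 2 + pp (Real.exp (-(2 * R * w))))) ?_
  · rw [HB.2, Real.norm_eq_abs] at this
    linarith
  · refine (ae_restrict_iff' measurableSet_Ioi).2 (Filter.Eventually.of_forall fun w hw => ?_)
    have hw : 0 < w := hw
    have h3 := log_approx (Real.exp (-(2 * R * w))) (Real.exp_pos _).le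
      (Real.exp_le_one_iff.2 (by have : 0 ≤ 2 * R * w := by positivity
                                 linarith))
    rw [log_split, ← mul_sub, norm_mul, Real.norm_eq_abs, Real.norm_eq_abs]
    have h4 : |KK (-2) R w| ≤ KK 2 R w := by
      unfold KK
      rw [abs_le]
      constructor
      · have : 0 ≤ Real.exp (-(R ^ 2 / 2)) *
          (Real.exp (-(-R) * w - w ^ 2 / 2) + Real.exp (-R * w - w ^ 2 / 2)) := by positivity
        linarith
      · have := Real.exp_pos (-0 * w - w ^ 2 / 2)
        linarith
    have h5 : R * w - Real.log 2 + Real.log (1 + Real.exp (-(2 * R * w))) -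
        (R * w - Real.log 2 + pp (Real.exp (-(2 * R * w)))) =
        Real.log (1 + Real.exp (-(2 * R * w))) - pp (Real.exp (-(2 * R * w))) := by ring
    rw [h5]
    calc _ ≤ KK 2 R w * (Real.exp (-(2 * R * w)) / 19601) :=
          mul_le_mul h4 h3 (abs_nonneg _) ((abs_nonneg _).trans h4)
      _ = _ := by ring

/-! ### Numerical bounds -/

lemma sqrt_bounds : (2.506627 : ℝ) ≤ √(2 * π) ∧ √(2 * π) ≤ 2.506629 := by
  have h1 := Real.pi_gt_d6
  have h2 := Real.pi_lt_d6
  constructor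
  · apply Real.le_sqrt_of_sq_le
    norm_num at *
    linarith
  · rw [Real.sqrt_le_left (by norm_num)]
    norm_num at *
    linarith

lemma bounds_a :
    ((4807477/10000000 : ℝ) ≤ mom 0 (1 * (333/200)) ∧ mom 0 (1 * (333/200)) ≤ 4807479/10000000) ∧
    ((2784413/10000000 : ℝ) ≤ mom 0 (2 * (333/200)) ∧ mom 0 (2 * (333/200)) ≤ 2784414/10000000) ∧
    ((1929880/10000000 : ℝ) ≤ mom 0 (3 * (333/200)) ∧ mom 0 (3 * (333/200)) ≤ 1929881/10000000) ∧
    ((1469715/10000000 : ℝ) ≤ mom 0 (4 * (333/200)) ∧ mom 0 (4 * (333/200)) ≤ 1469716/10000000) ∧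
    ((1184570/10000000 : ℝ) ≤ mom 0 (5 * (333/200)) ∧ mom 0 (5 * (333/200)) ≤ 1184571/10000000) ∧
    ((991258/10000000 : ℝ) ≤ mom 0 (6 * (333/200)) ∧ mom 0 (6 * (333/200)) ≤ 991259/10000000) ∧
    ((851819/10000000 : ℝ) ≤ mom 0 (7 * (333/200)) ∧ mom 0 (7 * (333/200)) ≤ 851820/10000000) ∧
    ((746588/10000000 : ℝ) ≤ mom 0 (8 * (333/200)) ∧ mom 0 (8 * (333/200)) ≤ 746589/10000000) ∧
    ((664400/10000000 : ℝ) ≤ mom 0 (9 * (333/200)) ∧ mom 0 (9 * (333/200)) ≤ 664401/10000000) ∧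
    ((598457/10000000 : ℝ) ≤ mom 0 (10 * (333/200)) ∧ mom 0 (10 * (333/200)) ≤ 598458/10000000) ∧
    ((544387/10000000 : ℝ) ≤ mom 0 (11 * (333/200)) ∧ mom 0 (11 * (333/200)) ≤ 544388/10000000) ∧
    ((499256/10000000 : ℝ) ≤ mom 0 (12 * (333/200)) ∧ mom 0 (12 * (333/200)) ≤ 499257/10000000) ∧
    ((461020/10000000 : ℝ) ≤ mom 0 (13 * (333/200)) ∧ mom 0 (13 * (333/200)) ≤ 461021/10000000) := by
  refine ⟨?_, ?_, ?_, ?_, ?_, ?_, ?_, ?_, ?_, ?_, ?_, ?_, ?_⟩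
  · have := mom_bounds (1 * (333/200)) 16 (4807477/10000000) (4807479/10000000) (by decide +kernel)
    push_cast at this
    exact this
  · have := mom_bounds (2 * (333/200)) 7 (2784413/10000000) (2784414/10000000) (by decide +kernel)
    push_cast at this
    exact this
  · have := mom_bounds (3 * (333/200)) 7 (1929880/10000000) (1929881/10000000) (by decide +kernel)
    push_cast at this
    exact this
  · have := mom_bounds (4 * (333/200)) 7 (1469715/10000000) (1469716/10000000) (by decide +kernel)
    push_cast at this
    exact this
  · have := mom_bounds (5 * (333/200)) 7 (1184570/10000000) (1184571/10000000) (by decide +kernel)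
    push_cast at this
    exact this
  · have := mom_bounds (6 * (333/200)) 7 (991258/10000000) (991259/10000000) (by decide +kernel)
    push_cast at this
    exact this
  · have := mom_bounds (7 * (333/200)) 7 (851819/10000000) (851820/10000000) (by decide +kernel)
    push_cast at this
    exact this
  · have := mom_bounds (8 * (333/200)) 7 (746588/10000000) (746589/10000000) (by decide +kernel)
    push_cast at this
    exact this
  · have := mom_bounds (9 * (333/200)) 7 (664400/10000000) (664401/10000000) (by decide +kernel)
    push_cast at this
    exact this
  · have := mom_bounds (10 * (333/200)) 7 (598457/10000000) (598458/10000000) (by decide +kernel)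
    push_cast at this
    exact this
  · have := mom_bounds (11 * (333/200)) 7 (544387/10000000) (544388/10000000) (by decide +kernel)
    push_cast at this
    exact this
  · have := mom_bounds (12 * (333/200)) 7 (499256/10000000) (499257/10000000) (by decide +kernel)
    push_cast at this
    exact this
  · have := mom_bounds (13 * (333/200)) 7 (461020/10000000) (461021/10000000) (by decide +kernel)
    push_cast at this
    exact this

lemma exp_a : (2500453/10000000 : ℝ) ≤ Real.exp (-((333/200) ^ 2 / 2)) ∧
    Real.exp (-((333/200) ^ 2 / 2)) ≤ 2500456/10000000 := by
  have hl := Real.sum_le_exp_of_nonneg (x := 110889/160000) (by norm_num) 12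
  have hu := Real.exp_bound' (x := 110889/160000) (by norm_num) (by norm_num) (n := 12) (by norm_num)
  norm_num [Finset.sum_range_succ, Nat.factorial] at hl hu
  have h1 : (1999818145/1000000000 : ℝ) ≤ Real.exp (110889/160000) := le_trans (by norm_num) hl
  have h2 : Real.exp (110889/160000) ≤ (1999818150/1000000000 : ℝ) := hu.trans (by norm_num)
  have e : Real.exp (-((333/200 : ℝ) ^ 2 / 2)) = (Real.exp (110889/160000) ^ 2)⁻¹ := by
    rw [← Real.exp_nat_mul, ← Real.exp_neg]
    norm_num
  rw [e]
  constructor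
  · rw [le_inv_comm₀ (by norm_num) (by positivity)]
    calc Real.exp (110889/160000) ^ 2 ≤ (1999818150/1000000000 : ℝ) ^ 2 := by gcongr
      _ ≤ _ := by norm_num
  · rw [inv_le_comm₀ (by positivity) (by norm_num)]
    calc _ ≤ (1999818145/1000000000 : ℝ) ^ 2 := by norm_num
      _ ≤ Real.exp (110889/160000) ^ 2 := by gcongr

lemma F_a : (∫ w : ℝ, (gaussQ (w - 333/200) - gaussQ w) * Real.tanh (333/200 * w)) < (333/200) / 2 := by
  have H := main_approx (333/200) (by norm_num) (by norm_num)
  obtain ⟨⟨l1, u1⟩, ⟨l2, u2⟩, ⟨l3, u3⟩, ⟨l4, u4⟩, ⟨l5, u5⟩, ⟨l6, u6⟩, ⟨l7, u7⟩, ⟨l8, u8⟩, ⟨l9, u9⟩, ⟨l10, u10⟩, ⟨l11, u11⟩, ⟨l12, u12⟩, ⟨l13, u13⟩⟩ := bounds_a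
  obtain ⟨E1, E2⟩ := exp_a
  set I := ∫ w : ℝ, (gaussQ (w - 333/200) - gaussQ w) * Real.tanh (333/200 * w)
  set E := Real.exp (-((333/200) ^ 2 / 2))
  have s1 := sqrt_bounds.1
  have s2 := sqrt_bounds.2
  have hX : momX (333/200) ≤ 1226942/1000000 := by unfold momX; linarith
  have hEX : E * momX (333/200) ≤ 2500456/10000000 * (1226942/1000000) :=
    (mul_le_mul_of_nonneg_left hX (by linarith)).trans
      (mul_le_mul_of_nonneg_right E2 (by norm_num))
  have hE : E * (mom 0 (1 * (333/200)) + mom 0 (3 * (333/200))) ≤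
      1 * (mom 0 (1 * (333/200)) + mom 0 (3 * (333/200))) :=
    mul_le_mul_of_nonneg_right (by linarith) (by linarith)
  have h := (abs_le.1 H).2
  unfold momY at h
  have h9 : √(2 * π) * ((333/200) * I) < √(2 * π) * ((333/200) * ((333/200) / 2)) := by linarith
  have h10 := lt_of_mul_lt_mul_left h9 (by linarith)
  exact lt_of_mul_lt_mul_left h10 (by norm_num)

lemma bounds_b :
    ((4805482/10000000 : ℝ) ≤ mom 0 (1 * (833/500)) ∧ mom 0 (1 * (833/500)) ≤ 4805484/10000000) ∧
    ((2782958/10000000 : ℝ) ≤ mom 0 (2 * (833/500)) ∧ mom 0 (2 * (833/500)) ≤ 2782959/10000000) ∧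
    ((1928800/10000000 : ℝ) ≤ mom 0 (3 * (833/500)) ∧ mom 0 (3 * (833/500)) ≤ 1928801/10000000) ∧
    ((1468869/10000000 : ℝ) ≤ mom 0 (4 * (833/500)) ∧ mom 0 (4 * (833/500)) ≤ 1468870/10000000) ∧
    ((1183878/10000000 : ℝ) ≤ mom 0 (5 * (833/500)) ∧ mom 0 (5 * (833/500)) ≤ 1183879/10000000) ∧
    ((990674/10000000 : ℝ) ≤ mom 0 (6 * (833/500)) ∧ mom 0 (6 * (833/500)) ≤ 990675/10000000) ∧
    ((851315/10000000 : ℝ) ≤ mom 0 (7 * (833/500)) ∧ mom 0 (7 * (833/500)) ≤ 851316/10000000) ∧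
    ((746145/10000000 : ℝ) ≤ mom 0 (8 * (833/500)) ∧ mom 0 (8 * (833/500)) ≤ 746146/10000000) ∧
    ((664005/10000000 : ℝ) ≤ mom 0 (9 * (833/500)) ∧ mom 0 (9 * (833/500)) ≤ 664006/10000000) ∧
    ((598100/10000000 : ℝ) ≤ mom 0 (10 * (833/500)) ∧ mom 0 (10 * (833/500)) ≤ 598101/10000000) ∧
    ((544062/10000000 : ℝ) ≤ mom 0 (11 * (833/500)) ∧ mom 0 (11 * (833/500)) ≤ 544063/10000000) ∧
    ((498957/10000000 : ℝ) ≤ mom 0 (12 * (833/500)) ∧ mom 0 (12 * (833/500)) ≤ 498958/10000000) ∧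
    ((460745/10000000 : ℝ) ≤ mom 0 (13 * (833/500)) ∧ mom 0 (13 * (833/500)) ≤ 460746/10000000) := by
  refine ⟨?_, ?_, ?_, ?_, ?_, ?_, ?_, ?_, ?_, ?_, ?_, ?_, ?_⟩
  · have := mom_bounds (1 * (833/500)) 16 (4805482/10000000) (4805484/10000000) (by decide +kernel)
    push_cast at this
    exact this
  · have := mom_bounds (2 * (833/500)) 7 (2782958/10000000) (2782959/10000000) (by decide +kernel)
    push_cast at this
    exact this
  · have := mom_bounds (3 * (833/500)) 7 (1928800/10000000) (1928801/10000000) (by decide +kernel)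
    push_cast at this
    exact this
  · have := mom_bounds (4 * (833/500)) 7 (1468869/10000000) (1468870/10000000) (by decide +kernel)
    push_cast at this
    exact this
  · have := mom_bounds (5 * (833/500)) 7 (1183878/10000000) (1183879/10000000) (by decide +kernel)
    push_cast at this
    exact this
  · have := mom_bounds (6 * (833/500)) 7 (990674/10000000) (990675/10000000) (by decide +kernel)
    push_cast at this
    exact this
  · have := mom_bounds (7 * (833/500)) 7 (851315/10000000) (851316/10000000) (by decide +kernel)
    push_cast at this
    exact this
  · have := mom_bounds (8 * (833/500)) 7 (746145/10000000) (746146/10000000) (by decide +kernel)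
    push_cast at this
    exact this
  · have := mom_bounds (9 * (833/500)) 7 (664005/10000000) (664006/10000000) (by decide +kernel)
    push_cast at this
    exact this
  · have := mom_bounds (10 * (833/500)) 7 (598100/10000000) (598101/10000000) (by decide +kernel)
    push_cast at this
    exact this
  · have := mom_bounds (11 * (833/500)) 7 (544062/10000000) (544063/10000000) (by decide +kernel)
    push_cast at this
    exact this
  · have := mom_bounds (12 * (833/500)) 7 (498957/10000000) (498958/10000000) (by decide +kernel)
    push_cast at this
    exact this
  · have := mom_bounds (13 * (833/500)) 7 (460745/10000000) (460746/10000000) (by decide +kernel)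
    push_cast at this
    exact this

lemma exp_b : (2496292/10000000 : ℝ) ≤ Real.exp (-((833/500) ^ 2 / 2)) ∧
    Real.exp (-((833/500) ^ 2 / 2)) ≤ 2496295/10000000 := by
  have hl := Real.sum_le_exp_of_nonneg (x := 693889/1000000) (by norm_num) 12
  have hu := Real.exp_bound' (x := 693889/1000000) (by norm_num) (by norm_num) (n := 12) (by norm_num)
  norm_num [Finset.sum_range_succ, Nat.factorial] at hl hu
  have h1 : (2001484187/1000000000 : ℝ) ≤ Real.exp (693889/1000000) := le_trans (by norm_num) hl
  have h2 : Real.exp (693889/1000000) ≤ (2001484192/1000000000 : ℝ) := hu.trans (by norm_num)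
  have e : Real.exp (-((833/500 : ℝ) ^ 2 / 2)) = (Real.exp (693889/1000000) ^ 2)⁻¹ := by
    rw [← Real.exp_nat_mul, ← Real.exp_neg]
    norm_num
  rw [e]
  constructor
  · rw [le_inv_comm₀ (by norm_num) (by positivity)]
    calc Real.exp (693889/1000000) ^ 2 ≤ (2001484192/1000000000 : ℝ) ^ 2 := by gcongr
      _ ≤ _ := by norm_num
  · rw [inv_le_comm₀ (by positivity) (by norm_num)]
    calc _ ≤ (2001484187/1000000000 : ℝ) ^ 2 := by norm_num
      _ ≤ Real.exp (693889/1000000) ^ 2 := by gcongr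

lemma F_b : (833/500) / 2 < ∫ w : ℝ, (gaussQ (w - 833/500) - gaussQ w) * Real.tanh (833/500 * w) := by
  have H := main_approx (833/500) (by norm_num) (by norm_num)
  obtain ⟨⟨l1, u1⟩, ⟨l2, u2⟩, ⟨l3, u3⟩, ⟨l4, u4⟩, ⟨l5, u5⟩, ⟨l6, u6⟩, ⟨l7, u7⟩, ⟨l8, u8⟩, ⟨l9, u9⟩, ⟨l10, u10⟩, ⟨l11, u11⟩, ⟨l12, u12⟩, ⟨l13, u13⟩⟩ := bounds_b
  obtain ⟨E1, E2⟩ := exp_b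
  set I := ∫ w : ℝ, (gaussQ (w - 833/500) - gaussQ w) * Real.tanh (833/500 * w)
  set E := Real.exp (-((833/500) ^ 2 / 2))
  have s1 := sqrt_bounds.1
  have s2 := sqrt_bounds.2
  have hX : 1226595/1000000 ≤ momX (833/500) := by unfold momX; linarith
  have hEX : 2496292/10000000 * (1226595/1000000) ≤ E * momX (833/500) :=
    (mul_le_mul_of_nonneg_right E1 (by norm_num)).trans
      (mul_le_mul_of_nonneg_left hX (by linarith))
  have hE : E * (mom 0 (1 * (833/500)) + mom 0 (3 * (833/500))) ≤
      1 * (mom 0 (1 * (833/500)) + mom 0 (3 * (833/500))) :=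
    mul_le_mul_of_nonneg_right (by linarith) (by linarith)
  have h := (abs_le.1 H).1
  unfold momY at h
  have h9 : √(2 * π) * ((833/500) * ((833/500) / 2)) < √(2 * π) * ((833/500) * I) := by linarith
  have h10 := lt_of_mul_lt_mul_left h9 (by linarith)
  exact lt_of_mul_lt_mul_left h10 (by norm_num)

/-- There exists `R ∈ (1.665, 1.666)` with
`∫_ℝ (Q(w-R) - Q(w)) tanh(Rw) dw = R/2`.  (This equation characterizes the threshold
`R̄₁ ≈ 1.665925641` for optimality of the two-point input `{-R, R}`.) -/
theorem stmt11 :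
    ∃ R : ℝ, R ∈ Set.Ioo (1.665 : ℝ) 1.666 ∧
      (∫ w : ℝ, (gaussQ (w - R) - gaussQ w) * Real.tanh (R * w)) = R / 2 := by
  have hc : ContinuousOn (fun R : ℝ =>
      (∫ w : ℝ, (gaussQ (w - R) - gaussQ w) * Real.tanh (R * w)) - R / 2)
      (Set.Icc (333/200) (833/500)) :=
    (F_cont.mono (Set.Icc_subset_Icc (by norm_num) (by norm_num))).sub (by fun_prop)
  have h := intermediate_value_Ioo (by norm_num) hc
  have h0 : (0 : ℝ) ∈ Set.Ioo
      ((∫ w : ℝ, (gaussQ (w - 333/200) - gaussQ w) * Real.tanh (333/200 * w)) - (333/200) / 2)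
      ((∫ w : ℝ, (gaussQ (w - 833/500) - gaussQ w) * Real.tanh (833/500 * w)) - (833/500) / 2) :=
    ⟨by linarith [F_a], by linarith [F_b]⟩
  obtain ⟨R, hR, hR2⟩ := h h0
  refine ⟨R, ⟨?_, ?_⟩, by simpa [sub_eq_zero] using hR2⟩
  · have := hR.1
    norm_num at *
    linarith
  · have := hR.2
    norm_num at *
    linarith
end

section
/- For every a > 0, the function u ↦ u / (a + √(a² + u))² is concave on [0, ∞) (and is nondecreasing there). -/
open Real

lemma aux_eq (a : ℝ) (ha : 0 < a) (u : ℝ) (hu : 0 ≤ u) :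
    u / (a + Real.sqrt (a ^ 2 + u)) ^ 2 = 1 - 2 * a * (a + Real.sqrt (a ^ 2 + u))⁻¹ := by
  have h1 : 0 ≤ a ^ 2 + u := by positivity
  have h2 := Real.sq_sqrt h1
  have h3 := Real.sqrt_nonneg (a ^ 2 + u)
  set s := Real.sqrt (a ^ 2 + u)
  have h4 : a + s ≠ 0 := by positivity
  have h5 : u = s ^ 2 - a ^ 2 := by linarith
  rw [h5]
  field_simp
  ring

lemma aux_inv (X Y p q : ℝ) (hX : 0 < X) (hY : 0 < Y) (hp : 0 ≤ p) (hq : 0 ≤ q)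
    (h : p + q = 1) : (p * X + q * Y)⁻¹ ≤ p * X⁻¹ + q * Y⁻¹ := by
  have hpos : 0 < p * X + q * Y := by
    rcases hp.eq_or_lt with h0 | h0
    · have : q = 1 := by linarith
      subst this; rw [← h0]; linarith
    · positivity
  have e : p * X⁻¹ + q * Y⁻¹ = (p * Y + q * X) / (X * Y) := by field_simp
  rw [e, inv_eq_one_div, div_le_div_iff₀ hpos (by positivity)]
  have hq' : q = 1 - p := by linarith
  have := mul_nonneg (mul_nonneg hp hq) (sq_nonneg (X - Y))
  subst hq'
  nlinarith

/-- For every `a > 0`, the function `u ↦ u/(a + √(a² + u))²` is concave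
on `[0, ∞)`, and is nondecreasing there. -/
theorem stmt12 (a : ℝ) (ha : 0 < a) :
    ConcaveOn ℝ (Set.Ici 0) (fun u : ℝ => u / (a + Real.sqrt (a ^ 2 + u)) ^ 2) ∧
      MonotoneOn (fun u : ℝ => u / (a + Real.sqrt (a ^ 2 + u)) ^ 2) (Set.Ici 0) := by
  constructor
  · refine ⟨convex_Ici 0, ?_⟩
    intro x hx y hy p q hp hq hpq
    simp only [Set.mem_Ici] at hx hy
    simp only [smul_eq_mul]
    rw [aux_eq a ha x hx, aux_eq a ha y hy, aux_eq a ha _ (by positivity)]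
    have hc := Real.strictConcaveOn_sqrt.concaveOn.2 (x := a ^ 2 + x) (y := a ^ 2 + y)
      (by simp only [Set.mem_Ici]; positivity) (by simp only [Set.mem_Ici]; positivity) hp hq hpq
    simp only [smul_eq_mul] at hc
    have e : p * (a ^ 2 + x) + q * (a ^ 2 + y) = a ^ 2 + (p * x + q * y) := by
      linear_combination a ^ 2 * hpq
    rw [e] at hc
    have h1 := aux_inv (a + √(a ^ 2 + x)) (a + √(a ^ 2 + y)) p q (by positivity) (by positivity)
      hp hq hpq
    have e2 : p * (a + √(a ^ 2 + x)) + q * (a + √(a ^ 2 + y))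
        = a + (p * √(a ^ 2 + x) + q * √(a ^ 2 + y)) := by
      linear_combination a * hpq
    rw [e2] at h1
    have h2 : (a + √(a ^ 2 + (p * x + q * y)))⁻¹
        ≤ (a + (p * √(a ^ 2 + x) + q * √(a ^ 2 + y)))⁻¹ :=
      inv_anti₀ (by positivity) (by linarith)
    have h3 := mul_le_mul_of_nonneg_left (h2.trans h1) (by positivity : 0 ≤ 2 * a)
    linarith
  · intro x hx y hy hxy
    simp only [Set.mem_Ici] at hx hy
    simp only
    rw [aux_eq a ha x hx, aux_eq a ha y hy]
    gcongr
end

section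
/- Let a > 0 and let U be a nonnegative integrable real random variable. Then E[ U / (a + √(a² + U))² ] ≤ E[U] / (a + √(a² + E[U]))². -/
open MeasureTheory Real

lemma tangent_aux (a : ℝ) (ha : 0 < a) (u m : ℝ) (hu : 0 ≤ u) (hm : 0 ≤ m) :
    u / (a + Real.sqrt (a ^ 2 + u)) ^ 2 ≤
      m / (a + Real.sqrt (a ^ 2 + m)) ^ 2 +
        a / (Real.sqrt (a ^ 2 + m) * (a + Real.sqrt (a ^ 2 + m)) ^ 2) * (u - m) := by
  have hs : 0 < Real.sqrt (a ^ 2 + u) := Real.sqrt_pos.2 (by positivity)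
  have ht : 0 < Real.sqrt (a ^ 2 + m) := Real.sqrt_pos.2 (by positivity)
  have hs2 : Real.sqrt (a ^ 2 + u) ^ 2 = a ^ 2 + u := Real.sq_sqrt (by positivity)
  have ht2 : Real.sqrt (a ^ 2 + m) ^ 2 = a ^ 2 + m := Real.sq_sqrt (by positivity)
  generalize Real.sqrt (a ^ 2 + u) = s at *
  generalize Real.sqrt (a ^ 2 + m) = t at *
  obtain rfl : u = s ^ 2 - a ^ 2 := by linarith
  obtain rfl : m = t ^ 2 - a ^ 2 := by linarith
  have key : (t ^ 2 - a ^ 2) / (a + t) ^ 2 +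
        a / (t * (a + t) ^ 2) * (s ^ 2 - a ^ 2 - (t ^ 2 - a ^ 2)) -
      (s ^ 2 - a ^ 2) / (a + s) ^ 2 =
      a * (s - t) ^ 2 * (s + 2 * t + a) / (t * (a + t) ^ 2 * (a + s)) := by
    field_simp
    ring
  have : 0 ≤ a * (s - t) ^ 2 * (s + 2 * t + a) / (t * (a + t) ^ 2 * (a + s)) := by
    positivity
  linarith

/-- Let `a > 0` and let `U` be a nonnegative integrable real random
variable.  Then `E[U/(a + √(a² + U))²] ≤ E[U]/(a + √(a² + E[U]))²`. -/
theorem stmt13 (a : ℝ) (ha : 0 < a)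
    {Ω : Type*} [mΩ : MeasurableSpace Ω] (P : Measure Ω) [IsProbabilityMeasure P]
    (U : Ω → ℝ) (hU : Integrable U P) (hU0 : ∀ ω, 0 ≤ U ω) :
    ∫ ω, U ω / (a + Real.sqrt (a ^ 2 + U ω)) ^ 2 ∂P ≤
      (∫ ω, U ω ∂P) / (a + Real.sqrt (a ^ 2 + ∫ ω, U ω ∂P)) ^ 2 := by
  have hm : 0 ≤ ∫ ω, U ω ∂P := integral_nonneg hU0
  set m := ∫ ω, U ω ∂P with hmdef
  set c := a / (Real.sqrt (a ^ 2 + m) * (a + Real.sqrt (a ^ 2 + m)) ^ 2) with hc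
  have hi : Integrable (fun ω => c * (U ω - m)) P :=
    (hU.sub (integrable_const m)).const_mul c
  have h := integral_mono_of_nonneg (μ := P)
    (f := fun ω => U ω / (a + Real.sqrt (a ^ 2 + U ω)) ^ 2)
    (g := fun ω => m / (a + Real.sqrt (a ^ 2 + m)) ^ 2 + c * (U ω - m))
    (Filter.Eventually.of_forall fun ω => div_nonneg (hU0 ω) (sq_nonneg _))
    ((integrable_const _).add hi)
    (Filter.Eventually.of_forall fun ω => tangent_aux a ha (U ω) m (hU0 ω) hm)
  refine h.trans (le_of_eq ?_)
  rw [integral_add (integrable_const _) hi, integral_const_mul,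
    integral_sub hU (integrable_const m)]
  simp [← hmdef]
end

section
/- For every c > 0, ∫₀¹ [ γc² / (1/2 + √(1/4 + γc²))² + γc²(1 + γc²) / (1/2 + √(1/4 + γc²(1 + γc²)))² ] dγ = ( log(√(4c² + 1) + 1) − log(c² + 1) − log 2 − √(4c² + 1) + 2c² + 1 ) / c². -/
open MeasureTheory Real

/-- For every `c > 0`:
`∫₀¹ [γc²/(1/2 + √(1/4 + γc²))² + γc²(1+γc²)/(1/2 + √(1/4 + γc²(1+γc²)))²] dγ
 = (log(√(4c²+1) + 1) - log(c²+1) - log 2 - √(4c²+1) + 2c² + 1)/c²`. -/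
theorem stmt14 (c : ℝ) (hc : 0 < c) :
    ∫ γ in (0 : ℝ)..1,
        (γ * c ^ 2 / (1 / 2 + Real.sqrt (1 / 4 + γ * c ^ 2)) ^ 2 +
          γ * c ^ 2 * (1 + γ * c ^ 2) /
            (1 / 2 + Real.sqrt (1 / 4 + γ * c ^ 2 * (1 + γ * c ^ 2))) ^ 2) =
      (Real.log (Real.sqrt (4 * c ^ 2 + 1) + 1) - Real.log (c ^ 2 + 1) - Real.log 2 -
          Real.sqrt (4 * c ^ 2 + 1) + 2 * c ^ 2 + 1) / c ^ 2 := by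
  have hC : 0 < c ^ 2 := by positivity
  generalize c ^ 2 = C at hC ⊢
  have h1 : ∀ γ ∈ Set.uIcc (0 : ℝ) 1,
      (γ * C / (1 / 2 + Real.sqrt (1 / 4 + γ * C)) ^ 2 +
          γ * C * (1 + γ * C) /
            (1 / 2 + Real.sqrt (1 / 4 + γ * C * (1 + γ * C))) ^ 2) =
      2 - 2 / (Real.sqrt (4 * (γ * C) + 1) + 1) - 1 / (γ * C + 1) := by
    intro γ hγ
    rw [Set.uIcc_of_le zero_le_one] at hγ
    have hx : 0 ≤ γ * C := mul_nonneg hγ.1 hC.le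
    generalize γ * C = x at hx ⊢
    have e1 : Real.sqrt (1 / 4 + x * (1 + x)) = x + 1 / 2 := by
      rw [Real.sqrt_eq_iff_mul_self_eq (by positivity) (by positivity)]
      ring
    have e2 : Real.sqrt (1 / 4 + x) = Real.sqrt (4 * x + 1) / 2 := by
      rw [Real.sqrt_eq_iff_mul_self_eq (by positivity) (by positivity)]
      have := Real.mul_self_sqrt (show 0 ≤ 4 * x + 1 by positivity)
      linarith
    rw [e1, e2]
    have hs := Real.mul_self_sqrt (show 0 ≤ 4 * x + 1 by positivity)
    have hs0 := Real.sqrt_nonneg (4 * x + 1)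
    generalize Real.sqrt (4 * x + 1) = s at hs hs0 ⊢
    have hxs : x = (s * s - 1) / 4 := by linarith
    have a1 : x / (1 / 2 + s / 2) ^ 2 = 1 - 2 / (s + 1) := by
      have : s + 1 ≠ 0 := by positivity
      have : 1 / 2 + s / 2 = (s + 1) / 2 := by ring
      rw [this, hxs]
      field_simp
      ring
    have a2 : x * (1 + x) / (1 / 2 + (x + 1 / 2)) ^ 2 = 1 - 1 / (x + 1) := by
      have : x + 1 ≠ 0 := by positivity
      have : 1 / 2 + (x + 1 / 2) = x + 1 := by ring
      rw [this]
      field_simp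
      ring
    rw [a1, a2]
    ring
  rw [intervalIntegral.integral_congr h1]
  have h2 : ∀ γ ∈ Set.uIcc (0 : ℝ) 1, HasDerivAt
      (fun γ : ℝ => (Real.log (Real.sqrt (4 * (γ * C) + 1) + 1) - Real.log (γ * C + 1)
        - Real.sqrt (4 * (γ * C) + 1) + 2 * (γ * C)) / C)
      (2 - 2 / (Real.sqrt (4 * (γ * C) + 1) + 1) - 1 / (γ * C + 1)) γ := by
    intro γ hγ
    rw [Set.uIcc_of_le zero_le_one] at hγ
    have hx : 0 ≤ γ * C := mul_nonneg hγ.1 hC.le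
    have d0 : HasDerivAt (fun γ : ℝ => γ * C) C γ := by
      simpa using (hasDerivAt_id γ).mul_const C
    have hp : 0 < Real.sqrt (4 * (γ * C) + 1) := Real.sqrt_pos.2 (by positivity)
    have d1 := ((d0.const_mul 4).add_const 1).sqrt (by positivity)
    have d2 := (d1.add_const 1).log (by positivity)
    have d3 := (d0.add_const 1).log (by positivity)
    refine HasDerivAt.congr_deriv ((((d2.sub d3).sub d1).add (d0.const_mul 2)).div_const C) ?_
    have : γ * C + 1 ≠ 0 := by positivity
    generalize Real.sqrt (4 * (γ * C) + 1) = s at hp ⊢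
    have : s + 1 ≠ 0 := by positivity
    generalize γ * C + 1 = x at *
    field_simp
    ring
  rw [intervalIntegral.integral_eq_sub_of_hasDerivAt h2]
  · norm_num
    ring
  · apply ContinuousOn.intervalIntegrable
    intro γ hγ
    rw [Set.uIcc_of_le zero_le_one] at hγ
    have hx : 0 ≤ γ * C := mul_nonneg hγ.1 hC.le
    apply ContinuousAt.continuousWithinAt
    have : γ * C + 1 ≠ 0 := by positivity
    have : Real.sqrt (4 * (γ * C) + 1) + 1 ≠ 0 := by positivity
    fun_prop (disch := assumption)
end

section
/- There exists c ∈ (1.860, 1.861) such that ∫₀¹ [ γc² / (1/2 + √(1/4 + γc²))² + γc²(1 + γc²) / (1/2 + √(1/4 + γc²(1 + γc²)))² ] dγ = 1. -/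
open MeasureTheory Real

noncomputable def GG (c : ℝ) : ℝ :=
  c ^ 2 - 2 * (1 / 2 + √(1 / 4 + c ^ 2) - 1) + log (1 / 2 + √(1 / 4 + c ^ 2)) - log (1 + c ^ 2)

lemma GG_cont : Continuous GG := by
  unfold GG
  have h1 : ∀ c : ℝ, 1 / 2 + √(1 / 4 + c ^ 2) ≠ 0 := fun c => by positivity
  have h2 : ∀ c : ℝ, 1 + c ^ 2 ≠ 0 := fun c => by positivity
  fun_prop (disch := assumption)

lemma GG_lo : GG 1.860 < 0 := by
  unfold GG
  have hs1 : (1.926:ℝ) < √(1 / 4 + 1.860 ^ 2) := by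
    apply Real.lt_sqrt_of_sq_lt; norm_num
  have hs2 : √(1 / 4 + 1.860 ^ 2) < (1.92604:ℝ) := by
    rw [Real.sqrt_lt' (by norm_num)]; norm_num
  set s := √(1 / 4 + (1.860:ℝ) ^ 2)
  have he : Real.exp 0.608 ≤ 1.838 := by
    refine (Real.exp_bound' (n := 8) (by norm_num) (by norm_num) (by norm_num)).trans ?_
    norm_num [Finset.sum_range_succ, Nat.factorial]
  have hl : log (1 / 2 + s) + 0.608 ≤ log (1 + 1.860 ^ 2) := by
    rw [← Real.log_exp 0.608, ← Real.log_mul (by linarith) (Real.exp_pos _).ne']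
    apply Real.log_le_log (mul_pos (by linarith) (Real.exp_pos _))
    calc (1 / 2 + s) * Real.exp 0.608 ≤ 2.42604 * 1.838 := by
          apply mul_le_mul (by linarith) he (Real.exp_pos _).le (by norm_num)
      _ ≤ _ := by norm_num
  norm_num at *
  linarith

lemma GG_hi : 0 < GG 1.861 := by
  unfold GG
  have hs1 : (1.926997:ℝ) < √(1 / 4 + 1.861 ^ 2) := by
    apply Real.lt_sqrt_of_sq_lt; norm_num
  have hs2 : √(1 / 4 + 1.861 ^ 2) < (1.926999:ℝ) := by
    rw [Real.sqrt_lt' (by norm_num)]; norm_num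
  set s := √(1 / 4 + (1.861:ℝ) ^ 2)
  have he : 1.8391 ≤ Real.exp 0.6093 := by
    refine le_trans ?_ (Real.sum_le_exp_of_nonneg (by norm_num) 9)
    norm_num [Finset.sum_range_succ, Nat.factorial]
  have hl : log (1 + 1.861 ^ 2) ≤ log (1 / 2 + s) + 0.6093 := by
    rw [← Real.log_exp 0.6093, ← Real.log_mul (by linarith) (Real.exp_pos _).ne']
    apply Real.log_le_log (by norm_num)
    calc (1 + 1.861 ^ 2 : ℝ) ≤ 2.426997 * 1.8391 := by norm_num
      _ ≤ _ := by
          apply mul_le_mul (by linarith) he (by norm_num) (by linarith)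
  norm_num at *
  linarith

lemma simp_integrand (t : ℝ) (ht : 0 ≤ t) :
    t / (1 / 2 + √(1 / 4 + t)) ^ 2 + t * (1 + t) / (1 / 2 + √(1 / 4 + t * (1 + t))) ^ 2
      = 2 - 1 / (1 / 2 + √(1 / 4 + t)) - 1 / (1 + t) := by
  have h : √(1 / 4 + t * (1 + t)) = 1 / 2 + t := by
    rw [show 1 / 4 + t * (1 + t) = (1 / 2 + t) ^ 2 by ring]
    exact Real.sqrt_sq (by linarith)
  rw [h]
  have hq : √(1 / 4 + t) ^ 2 = 1 / 4 + t := Real.sq_sqrt (by linarith)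
  have hp : 0 ≤ √(1 / 4 + t) := Real.sqrt_nonneg _
  generalize √(1 / 4 + t) = s at *
  have h1 : 1 / 2 + s ≠ 0 := by positivity
  have h2 : 1 + t ≠ 0 := by positivity
  have e1 : t / (1 / 2 + s) ^ 2 = 1 - 1 / (1 / 2 + s) := by
    rw [div_eq_iff (by positivity)]
    have : (1 - 1 / (1 / 2 + s)) * (1 / 2 + s) ^ 2 = (1 / 2 + s) ^ 2 - (1 / 2 + s) := by
      field_simp
    rw [this]; nlinarith
  have e2 : t * (1 + t) / (1 / 2 + (1 / 2 + t)) ^ 2 = 1 - 1 / (1 + t) := by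
    rw [show 1 / 2 + (1 / 2 + t) = 1 + t by ring]
    field_simp
    ring
  rw [e1, e2]; ring

lemma deriv_F (a : ℝ) (ha : 0 < a) (x : ℝ) (hx : 0 ≤ x) :
    HasDerivAt (fun x => 2 * x + (-2 * (1 / 2 + √(1 / 4 + x * a)) +
      log (1 / 2 + √(1 / 4 + x * a)) - log (1 + x * a)) / a)
      (2 - 1 / (1 / 2 + √(1 / 4 + x * a)) - 1 / (1 + x * a)) x := by
  have hxa : 0 ≤ x * a := by positivity
  have hl : HasDerivAt (fun x : ℝ => x * a) a x := by
    simpa using (hasDerivAt_id x).mul_const a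
  have hs := ((hl.const_add (1 / 4)).sqrt (by positivity)).const_add (1 / 2)
  have hlog := hs.log (by positivity)
  have hlog2 := (hl.const_add 1).log (by positivity)
  have := ((hasDerivAt_id x).const_mul 2).add ((((hs.const_mul (-2)).add hlog).sub hlog2).div_const a)
  refine this.congr_deriv ?_
  have hp : 0 < √(1 / 4 + x * a) := Real.sqrt_pos.2 (by positivity)
  generalize √(1 / 4 + x * a) = s at *
  have h2 : 1 + x * a ≠ 0 := by positivity
  have h3 : 1 / 2 + s ≠ 0 := by positivity
  have h4 : 1 + 2 * s ≠ 0 := by positivity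
  field_simp
  ring

/-- There exists `c ∈ (1.860, 1.861)` such that
`∫₀¹ [γc²/(1/2 + √(1/4 + γc²))² + γc²(1+γc²)/(1/2 + √(1/4 + γc²(1+γc²)))²] dγ = 1`.
(This equation determines `c = lim_{n→∞} R̄_n/√n ≈ 1.860935682`.) -/
theorem stmt15 :
    ∃ c : ℝ, c ∈ Set.Ioo (1.860 : ℝ) 1.861 ∧
      ∫ γ in (0 : ℝ)..1,
          (γ * c ^ 2 / (1 / 2 + Real.sqrt (1 / 4 + γ * c ^ 2)) ^ 2 +
            γ * c ^ 2 * (1 + γ * c ^ 2) /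
              (1 / 2 + Real.sqrt (1 / 4 + γ * c ^ 2 * (1 + γ * c ^ 2))) ^ 2) = 1 := by
  obtain ⟨c, hc, h0⟩ := intermediate_value_Ioo (by norm_num : (1.860:ℝ) ≤ 1.861)
    GG_cont.continuousOn ⟨GG_lo, GG_hi⟩
  refine ⟨c, hc, ?_⟩
  have hcpos : 0 < c := lt_trans (by norm_num) hc.1
  have ha : 0 < c ^ 2 := by positivity
  unfold GG at h0
  generalize c ^ 2 = a at *
  have hu : Set.uIcc (0:ℝ) 1 = Set.Icc 0 1 := Set.uIcc_of_le zero_le_one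
  rw [intervalIntegral.integral_congr (g := fun x => 2 - 1 / (1 / 2 + √(1 / 4 + x * a)) - 1 / (1 + x * a))
    (fun x hx => simp_integrand (x * a) (by rw [hu] at hx; exact mul_nonneg hx.1 ha.le))]
  rw [intervalIntegral.integral_eq_sub_of_hasDerivAt
    (fun x hx => deriv_F a ha x (by rw [hu] at hx; exact hx.1))]
  · have h4 : √(1 / 4 + 0 * a) = 1 / 2 := by
      rw [show 1 / 4 + 0 * a = (1 / 2) ^ 2 by ring]
      exact Real.sqrt_sq (by norm_num)
    rw [h4]
    have h5 : (1 / 2 + 1 / 2 : ℝ) = 1 := by norm_num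
    simp only [h5, one_mul, zero_mul, add_zero, Real.log_one]
    generalize log (1 / 2 + √(1 / 4 + a)) = L at *
    generalize log (1 + a) = M at *
    generalize √(1 / 4 + a) = s at *
    have h6 : -2 * (1 / 2 + s) + L - M = -a - 2 := by linarith
    rw [h6]
    field_simp
    ring
  · apply ContinuousOn.intervalIntegrable
    rw [hu]
    have h1 : ∀ x ∈ Set.Icc (0:ℝ) 1, 1 / 2 + √(1 / 4 + x * a) ≠ 0 := fun c _ => by positivity
    have h2 : ∀ x ∈ Set.Icc (0:ℝ) 1, 1 + x * a ≠ 0 := fun c hc => by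
      have := mul_nonneg hc.1 ha.le
      positivity
    fun_prop (disch := assumption)
end
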